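/- There exists a constant C > 0, depending only on n, κ0, κ1 and C₀, such that for every harmonic function u on Ω₁ with boundary values φ on Γ₁⁺ and ψ on Γ₁⁻, the function w := u − ũ satisfies the global energy estimate ∫_{Ω_{1/2}} |∇w|² dx ≤ C·(∫_{Ω₁} |w|² dx + ‖φ‖²_{C²} + ‖ψ‖²_{C²}). -/

import Mathlib

/-!
Write `w = u - ũ`, which is continuous up to `Γ₁⁺ ∪ Γ₁⁻` and vanishes there. The function `ũ` is
affine in `x_n`, so `∂_n ũ = (φ - ψ)/δ` does not depend on `x_n`; hence the field with horizontal
components `∂_α u` and vertical component `∂_n u - ∂_n ũ = ∂_n w` is divergence-free in `Ω₁`. Testing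
it against `χ² w`, where `χ = η(x')` is a cutoff equal to `1` for `|x'| ≤ 1/2` and supported in
`|x'| ≤ 3/4`, gives the Caccioppoli-type inequality
`∫ χ² |∇w|² ≲ ∫ |∇χ|² w² + ∫_{Ω₁} |∇'ũ|²`, with `∇'` the horizontal gradient.

To avoid any boundary regularity, `w` is replaced in the test function by `G_τ(w)`, where `G_τ`
(`truncG`) is a `C¹` truncation vanishing for `s² ≤ τ`. Then `χ² G_τ(w)` is compactly supported in
`Ω₁` (`exists_compact_superlevel`), so only the divergence theorem for compactly supported functions
is needed. The bound `|G_τ(s)| ≤ |s| G_τ'(s)` keeps all error terms under the weight `G_τ'(w) ≤ 1`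
(`truncated_energy`). Letting `τ → 0`, Fatou's lemma gives the estimate on `{w ≠ 0}`, and `∇w = 0`
almost everywhere on `{w = 0}` (`full_energy`).

It remains to bound the horizontal gradient of `ũ`. The gradients of `h1`, `h2` vanish at the origin,
so they are `O(|x'|) = O(δ^{1/2})`, which gives `|∇'ũ|² ≲ (‖φ‖ + ‖ψ‖)² / δ`
(`fderiv_util_horizontal_sq_le`). The vertical fibres of `Ω₁` have length `δ`, so `∫_{Ω₁} 1/δ` is
bounded by a constant independent of `ε` (`weight_integrable`). In the proofs `δ` is replaced by the
comparable quantity `ε + |x'|²`.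
-/

open MeasureTheory Metric Finset

noncomputable section

/-- `ℝ^{n-1}`, the horizontal (tangential) variables `x'`. -/
abbrev Ep (n : ℕ) := EuclideanSpace ℝ (Fin (n - 1))

/-- `ℝ^n = ℝ^{n-1} × ℝ`, points written `x = (x', x_n)`. -/
abbrev Efull (n : ℕ) := Ep n × ℝ

/-- The narrow region `Ω_r`. -/
def Omega (n : ℕ) (ε : ℝ) (h1 h2 : Ep n → ℝ) (r : ℝ) : Set (Efull n) :=
  {x | ‖x.1‖ < r ∧ -ε/2 + h2 x.1 < x.2 ∧ x.2 < ε/2 + h1 x.1}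

/-- Top boundary `Γ_r⁺`. -/
def Gammap (n : ℕ) (ε : ℝ) (h1 : Ep n → ℝ) (r : ℝ) : Set (Efull n) :=
  {x | ‖x.1‖ ≤ r ∧ x.2 = ε/2 + h1 x.1}

/-- Bottom boundary `Γ_r⁻`. -/
def Gammam (n : ℕ) (ε : ℝ) (h2 : Ep n → ℝ) (r : ℝ) : Set (Efull n) :=
  {x | ‖x.1‖ ≤ r ∧ x.2 = -ε/2 + h2 x.1}

/-- `Ω̂_s(x₀) = {x ∈ Ω_{1/2} : |x' - x₀'| < s}`. -/
def OmegaHat (n : ℕ) (ε : ℝ) (h1 h2 : Ep n → ℝ) (x0 : Efull n) (s : ℝ) : Set (Efull n) :=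
  {x | x ∈ Omega n ε h1 h2 (1/2) ∧ ‖x.1 - x0.1‖ < s}

/-- The `n` coordinate directions of `ℝ^{n-1} × ℝ`: the first `n-1` are the horizontal
Euclidean basis vectors, the last is the vertical direction. -/
def dir (n : ℕ) (α : Fin n) : Efull n :=
  if h : (α : ℕ) < n - 1 then (EuclideanSpace.single (⟨(α : ℕ), h⟩ : Fin (n - 1)) 1, (0:ℝ))
  else (0, 1)

/-- Tangential direction `e_α` for `α ∈ {1, …, n-1}`. -/
def tang (n : ℕ) (α : Fin (n - 1)) : Efull n := (EuclideanSpace.single α 1, (0:ℝ))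

/-- Vertical direction `e_n`. -/
def vert (n : ℕ) : Efull n := (0, 1)

/-- Pointwise Laplacian `Δu = Σ_α ∂_α∂_α u`. -/
def lapl (n : ℕ) (u : Efull n → ℝ) (x : Efull n) : ℝ :=
  ∑ α : Fin n, fderiv ℝ (fun y => fderiv ℝ u y (dir n α)) x (dir n α)

/-- The auxiliary function `ū(x', x_n) = (x_n - h2(x') + ε/2)/(ε + h1(x') - h2(x'))`. -/
def ubar (n : ℕ) (ε : ℝ) (h1 h2 : Ep n → ℝ) (x : Efull n) : ℝ :=
  (x.2 - h2 x.1 + ε/2) / (ε + h1 x.1 - h2 x.1)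

/-- The auxiliary function `ũ = φ(x')·ū + ψ(x')·(1 - ū)`. -/
def util (n : ℕ) (ε : ℝ) (h1 h2 φ ψ : Ep n → ℝ) (x : Efull n) : ℝ :=
  φ x.1 * ubar n ε h1 h2 x + ψ x.1 * (1 - ubar n ε h1 h2 x)

/-- `C²`-norm on the closed unit ball: `sup_{|x'| ≤ 1} (|f| + |∇f| + |∇²f|)`. -/
def C2norm {F : Type*} [NormedAddCommGroup F] [NormedSpace ℝ F] (n : ℕ)
    (f : Ep n → F) : ℝ :=
  ⨆ y : closedBall (0 : Ep n) 1,
    (‖f (y : Ep n)‖ + ‖fderiv ℝ f (y : Ep n)‖ + ‖fderiv ℝ (fderiv ℝ f) (y : Ep n)‖)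

/-- `C²(S)`-norm of a function on `ℝ^n`. -/
def C2normOn (n : ℕ) (S : Set (Efull n)) (f : Efull n → ℝ) : ℝ :=
  ⨆ y : S,
    (‖f (y : Efull n)‖ + ‖fderiv ℝ f (y : Efull n)‖ + ‖fderiv ℝ (fderiv ℝ f) (y : Efull n)‖)

/-- `‖∇f‖_∞ = sup_{|x'| ≤ 1} |∇f(x')|`. -/
def gradSup {F : Type*} [NormedAddCommGroup F] [NormedSpace ℝ F] (n : ℕ) (f : Ep n → F) : ℝ :=
  ⨆ y : closedBall (0 : Ep n) 1, ‖fderiv ℝ f (y : Ep n)‖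

/-- `‖∇²f‖_∞ = sup_{|x'| ≤ 1} |∇²f(x')|`. -/
def hessSup {F : Type*} [NormedAddCommGroup F] [NormedSpace ℝ F] (n : ℕ) (f : Ep n → F) : ℝ :=
  ⨆ y : closedBall (0 : Ep n) 1, ‖fderiv ℝ (fderiv ℝ f) (y : Ep n)‖

/-- The geometric hypotheses on `h1, h2`: `C²` on the closed unit ball, the two graphs
do not touch, flatness at the origin, strict convexity of the gap, and `C²`-bound `κ1`. -/
def HGeom (n : ℕ) (ε κ0 κ1 : ℝ) (h1 h2 : Ep n → ℝ) : Prop :=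
  ContDiffOn ℝ 2 h1 (closedBall 0 1) ∧ ContDiffOn ℝ 2 h2 (closedBall 0 1) ∧
  (∀ y : Ep n, ‖y‖ ≤ 1 → -ε/2 + h2 y < ε/2 + h1 y) ∧
  h1 0 = 0 ∧ h2 0 = 0 ∧ fderiv ℝ h1 0 = 0 ∧ fderiv ℝ h2 0 = 0 ∧
  (∀ v : Ep n, κ0 * ‖v‖^2 ≤ fderiv ℝ (fderiv ℝ (fun y => h1 y - h2 y)) 0 v v) ∧
  C2norm n h1 + C2norm n h2 ≤ κ1

/-- Comparability `(ε + |x'|²)/C₀ ≤ δ(x') ≤ C₀ (ε + |x'|²)`. -/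
def DeltaComp (n : ℕ) (ε C₀ : ℝ) (h1 h2 : Ep n → ℝ) : Prop :=
  ∀ y : Ep n, ‖y‖ ≤ 1 →
    (ε + ‖y‖^2) / C₀ ≤ ε + h1 y - h2 y ∧ ε + h1 y - h2 y ≤ C₀ * (ε + ‖y‖^2)

/-- Hypotheses on the coefficients: `C²`-regularity with total `C²(Ω₁)`-norm at most `κ2`,
boundedness `|A| ≤ Λ`, and the weak ellipticity (Legendre) condition with constant `λ`. -/
def CoeffHyp (n N : ℕ) (ε lam Lam κ2 : ℝ) (h1 h2 : Ep n → ℝ)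
    (A : Fin n → Fin n → Fin N → Fin N → Efull n → ℝ)
    (B : Fin n → Fin N → Fin N → Efull n → ℝ)
    (Cc : Fin n → Fin N → Fin N → Efull n → ℝ)
    (Dc : Fin N → Fin N → Efull n → ℝ) : Prop :=
  (∀ α β i j, ContDiffOn ℝ 2 (A α β i j) (Omega n ε h1 h2 1)) ∧
  (∀ α i j, ContDiffOn ℝ 2 (B α i j) (Omega n ε h1 h2 1)) ∧
  (∀ β i j, ContDiffOn ℝ 2 (Cc β i j) (Omega n ε h1 h2 1)) ∧
  (∀ i j, ContDiffOn ℝ 2 (Dc i j) (Omega n ε h1 h2 1)) ∧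
  ((∑ α : Fin n, ∑ β : Fin n, ∑ i : Fin N, ∑ j : Fin N,
      C2normOn n (Omega n ε h1 h2 1) (A α β i j)) +
   (∑ α : Fin n, ∑ i : Fin N, ∑ j : Fin N, C2normOn n (Omega n ε h1 h2 1) (B α i j)) +
   (∑ β : Fin n, ∑ i : Fin N, ∑ j : Fin N, C2normOn n (Omega n ε h1 h2 1) (Cc β i j)) +
   (∑ i : Fin N, ∑ j : Fin N, C2normOn n (Omega n ε h1 h2 1) (Dc i j)) ≤ κ2) ∧
  (∀ α β i j, ∀ x ∈ Omega n ε h1 h2 1, |A α β i j x| ≤ Lam) ∧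
  (∀ ξ : Efull n → EuclideanSpace ℝ (Fin N), ContDiff ℝ (⊤ : ℕ∞) ξ →
    HasCompactSupport ξ → tsupport ξ ⊆ Omega n ε h1 h2 1 →
    lam * ∫ x in Omega n ε h1 h2 1, ‖fderiv ℝ ξ x‖^2 ≤
      ∫ x in Omega n ε h1 h2 1,
        ∑ α : Fin n, ∑ β : Fin n, ∑ i : Fin N, ∑ j : Fin N,
          A α β i j x * fderiv ℝ ξ x (dir n α) i * fderiv ℝ ξ x (dir n β) j)

/-- `u` is a weak solution of
`∂_α(A^{αβ}_{ij} ∂_β u^j + B^α_{ij} u^j) + C^β_{ij} ∂_β u^j + D_{ij} u^j = 0` in `Ω₁`. -/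
def WeakSol (n N : ℕ) (ε : ℝ) (h1 h2 : Ep n → ℝ)
    (A : Fin n → Fin n → Fin N → Fin N → Efull n → ℝ)
    (B : Fin n → Fin N → Fin N → Efull n → ℝ)
    (Cc : Fin n → Fin N → Fin N → Efull n → ℝ)
    (Dc : Fin N → Fin N → Efull n → ℝ)
    (u : Efull n → EuclideanSpace ℝ (Fin N)) : Prop :=
  ContDiffOn ℝ 1 u (Omega n ε h1 h2 1) ∧
  IntegrableOn (fun x => ‖u x‖^2 + ‖fderiv ℝ u x‖^2) (Omega n ε h1 h2 1) ∧
  ∀ ζ : Efull n → EuclideanSpace ℝ (Fin N), ContDiff ℝ (⊤ : ℕ∞) ζ →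
    HasCompactSupport ζ → tsupport ζ ⊆ Omega n ε h1 h2 1 →
    (∫ x in Omega n ε h1 h2 1,
      ((∑ α : Fin n, ∑ i : Fin N,
          ((∑ β : Fin n, ∑ j : Fin N, A α β i j x * fderiv ℝ u x (dir n β) j) +
            ∑ j : Fin N, B α i j x * u x j) * fderiv ℝ ζ x (dir n α) i) -
        ∑ i : Fin N,
          ((∑ β : Fin n, ∑ j : Fin N, Cc β i j x * fderiv ℝ u x (dir n β) j) +
            ∑ j : Fin N, Dc i j x * u x j) * ζ x i)) = 0

/-- `u` attains the boundary values `(φ, ψ)` on `Γ₁⁺` and `Γ₁⁻`. -/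
def AttainsBV {F : Type*} [NormedAddCommGroup F] [NormedSpace ℝ F] (n : ℕ) (ε : ℝ)
    (h1 h2 : Ep n → ℝ) (u : Efull n → F) (φ ψ : Ep n → F) : Prop :=
  ContinuousOn u (Omega n ε h1 h2 1 ∪ Gammap n ε h1 1 ∪ Gammam n ε h2 1) ∧
  (∀ y : Ep n, ‖y‖ ≤ 1 → u (y, ε/2 + h1 y) = φ y ∧ u (y, -ε/2 + h2 y) = ψ y)

/-- `u` is a harmonic function on `Ω₁` with boundary values `φ` on `Γ₁⁺` and `ψ` on `Γ₁⁻`. -/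
def HarmBV (n : ℕ) (ε : ℝ) (h1 h2 : Ep n → ℝ) (u : Efull n → ℝ) (φ ψ : Ep n → ℝ) : Prop :=
  ContDiffOn ℝ 2 u (Omega n ε h1 h2 1) ∧
  (∀ x ∈ Omega n ε h1 h2 1, lapl n u x = 0) ∧
  IntegrableOn (fun x => ‖u x‖^2 + ‖fderiv ℝ u x‖^2) (Omega n ε h1 h2 1) ∧
  AttainsBV n ε h1 h2 u φ ψ

/-! ### A truncation of the identity -/

/-- Derivative of the truncation `truncG τ`: it vanishes for `s² ≤ τ`, takes values in `[0, 1)`,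
is nondecreasing in `|s|`, and tends to `1` as `τ → 0` at every `s ≠ 0`. -/
def truncg (τ s : ℝ) : ℝ := max (s ^ 2 - τ) 0 / (max (s ^ 2 - τ) 0 + τ)

/-- A `C¹` truncation of the identity which vanishes for `s² ≤ τ`. -/
def truncG (τ s : ℝ) : ℝ := ∫ r in (0 : ℝ)..s, truncg τ r

lemma truncg_continuous {τ : ℝ} (hτ : 0 < τ) : Continuous (truncg τ) := by
  unfold truncg
  refine Continuous.div (by fun_prop) (by fun_prop) fun s => ?_
  have := le_max_right (s ^ 2 - τ) 0
  linarith

lemma truncg_nonneg {τ : ℝ} (hτ : 0 < τ) (s : ℝ) : 0 ≤ truncg τ s := by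
  have := le_max_right (s ^ 2 - τ) 0
  unfold truncg
  positivity

lemma truncg_le_one {τ : ℝ} (hτ : 0 < τ) (s : ℝ) : truncg τ s ≤ 1 := by
  have := le_max_right (s ^ 2 - τ) 0
  unfold truncg
  rw [div_le_one (by linarith)]
  linarith

lemma truncg_mono {τ : ℝ} (hτ : 0 < τ) {r s : ℝ} (h : |r| ≤ |s|) : truncg τ r ≤ truncg τ s := by
  have h1 := le_max_right (s ^ 2 - τ) 0
  have h2 := le_max_right (r ^ 2 - τ) 0
  have h3 : max (r ^ 2 - τ) 0 ≤ max (s ^ 2 - τ) 0 :=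
    max_le_max (by linarith [sq_le_sq.2 h]) le_rfl
  unfold truncg
  rw [div_le_div_iff₀ (by linarith) (by linarith)]
  nlinarith

lemma truncg_eq_zero {τ s : ℝ} (h : s ^ 2 ≤ τ) : truncg τ s = 0 := by
  simp [truncg, max_eq_right (sub_nonpos.2 h)]

lemma truncG_hasDerivAt {τ : ℝ} (hτ : 0 < τ) (s : ℝ) :
    HasDerivAt (truncG τ) (truncg τ s) s :=
  intervalIntegral.integral_hasDerivAt_right
    ((truncg_continuous hτ).intervalIntegrable _ _)
    ((truncg_continuous hτ).stronglyMeasurableAtFilter _ _)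
    (truncg_continuous hτ).continuousAt

lemma truncG_contDiff {τ : ℝ} (hτ : 0 < τ) : ContDiff ℝ 1 (truncG τ) := by
  rw [contDiff_one_iff_deriv]
  refine ⟨fun s => (truncG_hasDerivAt hτ s).differentiableAt, ?_⟩
  have : deriv (truncG τ) = truncg τ := funext fun s => (truncG_hasDerivAt hτ s).deriv
  rw [this]
  exact truncg_continuous hτ

/-- Since `truncg τ` is nondecreasing in `|s|`, its primitive is controlled by it; this is what
lets every error term in the energy estimate carry the same weight `truncg τ (w x)`. -/
lemma abs_truncG_le {τ : ℝ} (hτ : 0 < τ) (s : ℝ) : |truncG τ s| ≤ truncg τ s * |s| := by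
  have := intervalIntegral.norm_integral_le_of_norm_le_const (a := 0) (b := s) (f := truncg τ)
    (C := truncg τ s) (fun r hr => by
      rw [Real.norm_eq_abs, abs_of_nonneg (truncg_nonneg hτ r)]
      apply truncg_mono hτ
      rcases le_total 0 s with hs | hs
      · rw [Set.uIoc_of_le hs] at hr
        rw [abs_of_pos hr.1, abs_of_nonneg hs]; exact hr.2
      · rw [Set.uIoc_of_ge hs] at hr
        rw [abs_of_nonpos hr.2, abs_of_nonpos hs]; linarith [hr.1])
  simpa [truncG] using this

lemma truncG_eq_zero {τ s : ℝ} (hτ : 0 < τ) (h : s ^ 2 ≤ τ) : truncG τ s = 0 := by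
  have := abs_truncG_le hτ s
  rw [truncg_eq_zero h, zero_mul] at this
  exact abs_nonpos_iff.1 this

lemma truncg_tendsto {s : ℝ} (hs : s ≠ 0) :
    Filter.Tendsto (fun k : ℕ => truncg (1 / ((k : ℝ) + 1)) s) Filter.atTop (nhds 1) := by
  have h1 : Filter.Tendsto (fun k : ℕ => 1 / ((k : ℝ) + 1)) Filter.atTop (nhds 0) :=
    tendsto_one_div_add_atTop_nhds_zero_nat
  have h2 : ContinuousAt (fun τ => truncg τ s) 0 := by
    unfold truncg
    refine ContinuousAt.div (by fun_prop) (by fun_prop) ?_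
    have : 0 < s ^ 2 := by positivity
    simp only [sub_zero, add_zero]
    rw [max_eq_left this.le]
    exact this.ne'
  have h3 : truncg 0 s = 1 := by
    have : 0 < s ^ 2 := by positivity
    simp only [truncg, sub_zero, add_zero]
    rw [max_eq_left this.le, div_self this.ne']
  have h4 := h2.tendsto.comp h1
  rw [h3] at h4
  exact h4

/-! ### Divergence theorem for compactly supported fields, and gradients on zero sets -/

section General

variable {E : Type*} [NormedAddCommGroup E] [NormedSpace ℝ E] [FiniteDimensional ℝ E]
  [MeasurableSpace E] [BorelSpace E] (μ : Measure E) [μ.IsAddHaarMeasure]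

lemma integral_fderiv_eq_zero_of_compactSupport {F : E → ℝ} (hF : ContDiff ℝ 1 F)
    (hc : HasCompactSupport F) (v : E) : ∫ x, fderiv ℝ F x v ∂μ = 0 := by
  have hcont : Continuous fun x => fderiv ℝ F x v :=
    (hF.continuous_fderiv (by norm_num)).clm_apply continuous_const
  have hsupp : HasCompactSupport fun x => fderiv ℝ F x v :=
    hc.fderiv_apply (𝕜 := ℝ) v
  -- integration by parts against the constant function `1`
  have := integral_mul_fderiv_eq_neg_fderiv_mul_of_integrable (μ := μ) (𝕜 := ℝ)
    (f := fun _ : E => (1 : ℝ)) (g := F) (v := v)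
    (by simp) (by simpa using hcont.integrable_of_hasCompactSupport hsupp)
    (by simpa using hF.continuous.integrable_of_hasCompactSupport hc)
    (fun x _ => differentiableAt_const _)
    (fun x _ => (hF.differentiable (by norm_num)).differentiableAt)
  simpa using this

/-- Only the values of `F` on the open set `U` matter: `F` is `C¹` there and vanishes outside a
compact subset. -/
lemma integrableOn_and_setIntegral_fderiv_eq_zero {U K : Set E} (hU : IsOpen U)
    (hK : IsCompact K) (hKU : K ⊆ U) {F : E → ℝ} (hF : ContDiffOn ℝ 1 F U)
    (h0 : ∀ x ∈ U, x ∉ K → F x = 0) (v : E) :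
    IntegrableOn (fun x => fderiv ℝ F x v) U μ ∧ ∫ x in U, fderiv ℝ F x v ∂μ = 0 := by
  set F' : E → ℝ := U.indicator F with hF'
  have hzero : ∀ x, x ∉ K → F' x = 0 := fun x hx => by
    by_cases hxU : x ∈ U
    · rw [hF', Set.indicator_of_mem hxU, h0 x hxU hx]
    · rw [hF', Set.indicator_of_notMem hxU]
  have heqU : ∀ x ∈ U, F' =ᶠ[nhds x] F := fun x hx => by
    filter_upwards [hU.mem_nhds hx] with y hy
    rw [hF', Set.indicator_of_mem hy]
  have heqK : ∀ x, x ∉ K → F' =ᶠ[nhds x] fun _ => 0 := fun x hx => by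
    filter_upwards [hK.isClosed.isOpen_compl.mem_nhds hx] with y hy
    exact hzero y hy
  have hcd : ContDiff ℝ 1 F' := by
    rw [contDiff_iff_contDiffAt]
    intro x
    by_cases hx : x ∈ K
    · exact ((hF x (hKU hx)).contDiffAt (hU.mem_nhds (hKU hx))).congr_of_eventuallyEq
        (heqU x (hKU hx))
    · exact contDiffAt_const.congr_of_eventuallyEq (heqK x hx)
  have hcs : HasCompactSupport F' := HasCompactSupport.intro hK hzero
  have hcont : Continuous fun x => fderiv ℝ F' x v :=
    (hcd.continuous_fderiv (by norm_num)).clm_apply continuous_const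
  have hint : Integrable (fun x => fderiv ℝ F' x v) μ :=
    hcont.integrable_of_hasCompactSupport (hcs.fderiv_apply (𝕜 := ℝ) v)
  have heq : Set.EqOn (fun x => fderiv ℝ F' x v) (fun x => fderiv ℝ F x v) U := fun x hx => by
    simp only [(heqU x hx).fderiv_eq]
  refine ⟨(integrableOn_congr_fun heq hU.measurableSet).1 hint.integrableOn, ?_⟩
  rw [← setIntegral_congr_fun hU.measurableSet heq, setIntegral_eq_integral_of_forall_compl_eq_zero]
  · exact integral_fderiv_eq_zero_of_compactSupport μ hcd hcs v
  · intro x hx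
    rw [(heqK x fun h => hx (hKU h)).fderiv_eq]
    simp

/-- The gradient of a differentiable function vanishes almost everywhere on its zero set: along
each line in direction `v`, the zeros at which `∂ᵥw ≠ 0` are isolated, hence form a null set. -/
lemma ae_fderiv_eq_zero_of_eq_zero {U : Set E} (hU : IsOpen U) {w : E → ℝ}
    (hw : DifferentiableOn ℝ w U) (v : E) :
    ∀ᵐ x ∂μ, x ∈ U → w x = 0 → fderiv ℝ w x v = 0 := by
  set L : ℝ →ₗ[ℝ] E := LinearMap.toSpanSingleton ℝ E v with hL
  have hmeas : MeasurableSet {x | x ∈ U → w x = 0 → fderiv ℝ w x v = 0} := by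
    have h1 : MeasurableSet (U ∩ w ⁻¹' {0}ᶜ) :=
      (hw.continuousOn.isOpen_inter_preimage hU isOpen_compl_singleton).measurableSet
    have h2 : MeasurableSet {x | fderiv ℝ w x v = 0} :=
      measurableSet_eq_fun (measurable_fderiv_apply_const ℝ w v) measurable_const
    have : {x | x ∈ U → w x = 0 → fderiv ℝ w x v = 0} =
        Uᶜ ∪ (U ∩ w ⁻¹' {0}ᶜ) ∪ {x | fderiv ℝ w x v = 0} := by
      ext x
      simp only [Set.mem_ofPred_eq, Set.mem_union, Set.mem_compl_iff, Set.mem_inter_iff,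
        Set.mem_preimage, Set.mem_singleton_iff]
      tauto
    rw [this]
    exact (hU.measurableSet.compl.union h1).union h2
  refine ae_mem_of_ae_add_linearMap_mem L volume μ hmeas fun y => ?_
  rw [ae_iff]
  refine measure_null_of_locally_null _ fun t ht => ?_
  have ht' : ¬ (y + L t ∈ U → w (y + L t) = 0 → fderiv ℝ w (y + L t) v = 0) := ht
  rw [Classical.not_imp, Classical.not_imp] at ht'
  obtain ⟨htU, -, htd⟩ := ht'
  have hd : HasDerivAt (fun s : ℝ => w (y + L s)) (fderiv ℝ w (y + L t) v) t := by
    have h1 : HasDerivAt (fun s : ℝ => y + L s) v t := by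
      simpa [hL] using ((hasDerivAt_id t).smul_const v).const_add y
    exact ((hw.differentiableAt (hU.mem_nhds htU)).hasFDerivAt.comp_hasDerivAt t h1)
  refine ⟨{t}, ?_, by simp⟩
  have hne := hd.eventually_ne (c := 0) htd
  rw [eventually_nhdsWithin_iff] at hne
  rw [mem_nhdsWithin_iff_eventually]
  filter_upwards [hne] with s hs hs'
  have hs'' : ¬ (y + L s ∈ U → w (y + L s) = 0 → fderiv ℝ w (y + L s) v = 0) := hs'
  rw [Classical.not_imp, Classical.not_imp] at hs''
  by_contra hst
  exact hs hst hs''.2.1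

end General

/-! ### The energy inequality -/

lemma isAddHaar_volume (n : ℕ) : (volume : Measure (Efull n)).IsAddHaarMeasure :=
  inferInstanceAs ((volume : Measure (Ep n)).prod (volume : Measure ℝ)).IsAddHaarMeasure

/-- Young's inequality for one component of the tested integrand: `p = ∂_α w`, `b = ∂_α χ`,
`p + a` is the component of the divergence-free field, and `2 χ b G + χ² g p` is the derivative of
the test function `χ² G(w)` with `g = G'(w)`. -/
lemma pointwise_energy {χ b G g p a w : ℝ} (hg : 0 ≤ g) (hG : |G| ≤ g * |w|) :
    1 / 2 * (g * (χ ^ 2 * p ^ 2)) - g * (2 * (χ ^ 2 * a ^ 2) + 5 * (b ^ 2 * w ^ 2)) ≤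
      (p + a) * (2 * χ * b * G + χ ^ 2 * (g * p)) := by
  have h1 : -(g * |w| * |2 * b * (χ * p)|) ≤ G * (2 * b * (χ * p)) := by
    have := neg_abs_le (G * (2 * b * (χ * p)))
    rw [abs_mul] at this
    nlinarith [mul_le_mul_of_nonneg_right hG (abs_nonneg (2 * b * (χ * p)))]
  have h2 : -(g * |w| * |2 * b * (χ * a)|) ≤ G * (2 * b * (χ * a)) := by
    have := neg_abs_le (G * (2 * b * (χ * a)))
    rw [abs_mul] at this
    nlinarith [mul_le_mul_of_nonneg_right hG (abs_nonneg (2 * b * (χ * a)))]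
  have h3 : |w| * |2 * b * (χ * p)| ≤ 1 / 4 * (χ * p) ^ 2 + 4 * (b * w) ^ 2 := by
    rw [← abs_mul]
    refine abs_le.2 ⟨?_, ?_⟩
    · nlinarith [sq_nonneg (1 / 2 * (χ * p) + 2 * (b * w))]
    · nlinarith [sq_nonneg (1 / 2 * (χ * p) - 2 * (b * w))]
  have h4 : |w| * |2 * b * (χ * a)| ≤ (χ * a) ^ 2 + (b * w) ^ 2 := by
    rw [← abs_mul]
    refine abs_le.2 ⟨?_, ?_⟩
    · nlinarith [sq_nonneg ((χ * a) + (b * w))]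
    · nlinarith [sq_nonneg ((χ * a) - (b * w))]
  have h5 : 0 ≤ g * (1 / 4 * (χ * p) ^ 2 + (χ * p) * (χ * a) + (χ * a) ^ 2) :=
    mul_nonneg hg (by nlinarith [sq_nonneg (1 / 2 * (χ * p) + χ * a)])
  have h6 := mul_le_mul_of_nonneg_left h3 hg
  have h7 := mul_le_mul_of_nonneg_left h4 hg
  nlinarith

/-- The energy inequality with the weight `truncg τ (w x)`, obtained by testing the divergence-free
field with components `∂_α u - c_α` against `χ² · truncG τ w`. The corrections `c_α` are allowed to
be any functions with `∂_α c_α = 0`. -/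
lemma truncated_energy {n : ℕ} {U : Set (Efull n)} (hU : IsOpen U) {u ut : Efull n → ℝ}
    (hu : ContDiffOn ℝ 2 u U) (hut : ContDiffOn ℝ 2 ut U) {c : Fin n → Efull n → ℝ}
    (hc : ∀ α, ContDiffOn ℝ 1 (c α) U)
    (hdc : ∀ α, ∀ x ∈ U, fderiv ℝ (c α) x (dir n α) = 0)
    (hlap : ∀ x ∈ U, lapl n u x = 0)
    {χ : Efull n → ℝ} (hχ : ContDiff ℝ 1 χ) (hχ1 : ∀ x, |χ x| ≤ 1) {κ : ℝ}
    (hκ : ∀ x α, |fderiv ℝ χ x (dir n α)| ≤ κ)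
    {R : Efull n → ℝ} (hRi : IntegrableOn R U)
    (hR : ∀ x ∈ U, ∑ α : Fin n, (2 * (fderiv ℝ ut x (dir n α) - c α x) ^ 2 +
      5 * (κ ^ 2 * (u x - ut x) ^ 2)) ≤ R x)
    {τ : ℝ} (hτ : 0 < τ) {K : Set (Efull n)} (hK : IsCompact K) (hKU : K ⊆ U)
    (hK0 : ∀ x ∈ U, x ∉ K → χ x = 0 ∨ (u x - ut x) ^ 2 ≤ τ) :
    ∫⁻ x in U, ENNReal.ofReal (truncg τ (u x - ut x) * (χ x ^ 2 *
        ∑ α : Fin n, (fderiv ℝ (fun z => u z - ut z) x (dir n α)) ^ 2)) ≤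
      ENNReal.ofReal (2 * ∫ x in U, R x) := by
  have := isAddHaar_volume n
  set w : Efull n → ℝ := fun z => u z - ut z with hw
  have hwC : ContDiffOn ℝ 2 w U := hu.sub hut
  have hwC1 : ContDiffOn ℝ 1 w U := hwC.of_le (by norm_num)
  set X : Fin n → Efull n → ℝ := fun α x => fderiv ℝ u x (dir n α) - c α x with hX
  have hdu : ∀ α, ContDiffOn ℝ 1 (fun x => fderiv ℝ u x (dir n α)) U := fun α =>
    (hu.fderiv_of_isOpen hU (m := 1) (by norm_num)).clm_apply contDiffOn_const
  have hXC : ∀ α, ContDiffOn ℝ 1 (X α) U := fun α => (hdu α).sub (hc α)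
  set F : Fin n → Efull n → ℝ := fun α x => X α x * (χ x ^ 2 * truncG τ (w x)) with hF
  have hFC : ∀ α, ContDiffOn ℝ 1 (F α) U := fun α =>
    (hXC α).mul ((hχ.contDiffOn.pow 2).mul ((truncG_contDiff hτ).comp_contDiffOn hwC1))
  have hF0 : ∀ α, ∀ x ∈ U, x ∉ K → F α x = 0 := fun α x hx hxK => by
    rcases hK0 x hx hxK with h | h
    · simp [hF, h]
    · have h' : truncG τ (w x) = 0 := truncG_eq_zero hτ h
      simp [hF, h']
  have hdiv := fun α => integrableOn_and_setIntegral_fderiv_eq_zero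
    (volume : Measure (Efull n)) hU hK hKU (hFC α) (hF0 α) (dir n α)
  set I : Efull n → ℝ := fun x => ∑ α : Fin n, fderiv ℝ (F α) x (dir n α) with hI
  have hIi : IntegrableOn I U := integrable_finsetSum _ fun α _ => (hdiv α).1
  have hI0 : ∫ x in U, I x = 0 := by
    rw [hI, integral_finsetSum _ fun α _ => (hdiv α).1]
    exact Finset.sum_eq_zero fun α _ => (hdiv α).2
  have hIx : ∀ x ∈ U, I x = ∑ α : Fin n, X α x * (2 * χ x * fderiv ℝ χ x (dir n α) *
      truncG τ (w x) + χ x ^ 2 * (truncg τ (w x) * fderiv ℝ w x (dir n α))) := by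
    intro x hx
    have hat : ∀ {f : Efull n → ℝ}, ContDiffOn ℝ 1 f U → HasFDerivAt f (fderiv ℝ f x) x :=
      fun hf => ((hf.differentiableOn (by norm_num)).differentiableAt
        (hU.mem_nhds hx)).hasFDerivAt
    have hterm : ∀ α, fderiv ℝ (F α) x (dir n α) =
        fderiv ℝ (fun y => fderiv ℝ u y (dir n α)) x (dir n α) *
          (χ x ^ 2 * truncG τ (w x)) +
        X α x * (2 * χ x * fderiv ℝ χ x (dir n α) *
          truncG τ (w x) + χ x ^ 2 * (truncg τ (w x) * fderiv ℝ w x (dir n α))) := by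
      intro α
      have h1 := (hat (hdu α)).sub (hat (hc α))
      have h2 := (hat (hχ.contDiffOn)).pow 2
      have h3 := (truncG_hasDerivAt hτ (w x)).comp_hasFDerivAt x (hat hwC1)
      have h4 := (h1.mul (h2.mul h3)).fderiv
      have h5 : fderiv ℝ (F α) x = _ := h4
      rw [h5]
      simp only [add_apply, smul_apply, sub_apply, smul_eq_mul, hdc α x hx, hX, Function.comp_apply,
        Pi.mul_apply, Pi.sub_apply, nsmul_eq_mul]
      push_cast
      ring
    simp only [hI, hterm, Finset.sum_add_distrib, ← Finset.sum_mul]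
    have := hlap x hx
    rw [lapl] at this
    rw [this]
    ring
  set J : Efull n → ℝ := fun x => truncg τ (w x) * (χ x ^ 2 *
        ∑ α : Fin n, (fderiv ℝ w x (dir n α)) ^ 2) with hJ
  have hJ0 : ∀ x, 0 ≤ J x := fun x => mul_nonneg (truncg_nonneg hτ _)
    (mul_nonneg (sq_nonneg _) (Finset.sum_nonneg fun α _ => sq_nonneg _))
  have hJle : ∀ x ∈ U, J x ≤ 2 * (I x + R x) := by
    intro x hx
    have hg0 := truncg_nonneg hτ (w x)
    have hg1 := truncg_le_one hτ (w x)
    have hp : ∀ α, X α x = fderiv ℝ w x (dir n α) + (fderiv ℝ ut x (dir n α) - c α x) := by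
      intro α
      have hd1 := (hu.differentiableOn (by norm_num)).differentiableAt (hU.mem_nhds hx)
      have hd2 := (hut.differentiableOn (by norm_num)).differentiableAt (hU.mem_nhds hx)
      have : fderiv ℝ w x = fderiv ℝ u x - fderiv ℝ ut x := fderiv_fun_sub hd1 hd2
      rw [this, hX]
      simp
    have hsum : ∑ α : Fin n, (1 / 2 * (truncg τ (w x) * (χ x ^ 2 *
        (fderiv ℝ w x (dir n α)) ^ 2)) - (2 * (fderiv ℝ ut x (dir n α) - c α x) ^ 2 +
          5 * (κ ^ 2 * (w x) ^ 2))) ≤ I x := by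
      rw [hIx x hx]
      refine Finset.sum_le_sum fun α _ => ?_
      rw [hp α]
      refine le_trans ?_ (pointwise_energy hg0 (abs_truncG_le hτ (w x)))
      have hχ2 : χ x ^ 2 ≤ 1 := by
        rw [← sq_abs]; exact pow_le_one₀ (abs_nonneg _) (hχ1 x)
      have hb2 : (fderiv ℝ χ x (dir n α)) ^ 2 ≤ κ ^ 2 := by
        rw [← sq_abs]; exact pow_le_pow_left₀ (abs_nonneg _) (hκ x α) 2
      have e1 := mul_le_mul_of_nonneg_right hχ2 (sq_nonneg (fderiv ℝ ut x (dir n α) - c α x))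
      have e2 := mul_le_mul_of_nonneg_right hb2 (sq_nonneg (w x))
      have e3 : 0 ≤ 2 * (χ x ^ 2 * (fderiv ℝ ut x (dir n α) - c α x) ^ 2) +
        5 * ((fderiv ℝ χ x (dir n α)) ^ 2 * w x ^ 2) := by positivity
      have e4 := mul_le_mul_of_nonneg_right hg1 e3
      linarith
    rw [Finset.sum_sub_distrib, ← Finset.mul_sum, ← Finset.mul_sum, ← Finset.mul_sum] at hsum
    have := hR x hx
    simp only [hJ]
    linarith
  have hw_meas : AEMeasurable w (volume.restrict U) :=
    hwC.continuousOn.aemeasurable hU.measurableSet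
  have hJm : AEMeasurable J (volume.restrict U) := by
    refine ((truncg_continuous hτ).measurable.comp_aemeasurable hw_meas).mul
      (((hχ.continuous.pow 2).measurable).aemeasurable.mul ?_)
    exact (Finset.measurable_fun_sum _ fun α _ =>
      (measurable_fderiv_apply_const ℝ w (dir n α)).pow_const 2).aemeasurable
  have hIR : IntegrableOn (fun x => 2 * (I x + R x)) U := (hIi.add hRi).const_mul 2
  calc ∫⁻ x in U, ENNReal.ofReal (J x)
      ≤ ∫⁻ x in U, ENNReal.ofReal (2 * (I x + R x)) := by
        refine setLIntegral_mono_ae' hU.measurableSet (Filter.Eventually.of_forall fun x hx => ?_)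
        exact ENNReal.ofReal_le_ofReal (hJle x hx)
    _ = ENNReal.ofReal (∫ x in U, 2 * (I x + R x)) := by
        rw [ofReal_integral_eq_lintegral_ofReal hIR]
        exact (ae_restrict_iff' hU.measurableSet).2
          (Filter.Eventually.of_forall fun x hx => (hJ0 x).trans (hJle x hx))
    _ = ENNReal.ofReal (2 * ∫ x in U, R x) := by
        rw [integral_const_mul, integral_add hIi hRi, hI0, zero_add]

/-- Letting `τ → 0` in `truncated_energy`: the weight tends to the indicator of `{w ≠ 0}`, and the
gradient of `w` vanishes almost everywhere on `{w = 0}`. -/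
lemma full_energy {n : ℕ} {U : Set (Efull n)} (hU : IsOpen U) {u ut : Efull n → ℝ}
    (hu : ContDiffOn ℝ 2 u U) (hut : ContDiffOn ℝ 2 ut U) {c : Fin n → Efull n → ℝ}
    (hc : ∀ α, ContDiffOn ℝ 1 (c α) U)
    (hdc : ∀ α, ∀ x ∈ U, fderiv ℝ (c α) x (dir n α) = 0)
    (hlap : ∀ x ∈ U, lapl n u x = 0)
    {χ : Efull n → ℝ} (hχ : ContDiff ℝ 1 χ) (hχ1 : ∀ x, |χ x| ≤ 1) {κ : ℝ}
    (hκ : ∀ x α, |fderiv ℝ χ x (dir n α)| ≤ κ)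
    {R : Efull n → ℝ} (hRi : IntegrableOn R U)
    (hR : ∀ x ∈ U, ∑ α : Fin n, (2 * (fderiv ℝ ut x (dir n α) - c α x) ^ 2 +
      5 * (κ ^ 2 * (u x - ut x) ^ 2)) ≤ R x)
    (hK : ∀ τ : ℝ, 0 < τ → ∃ K : Set (Efull n), IsCompact K ∧ K ⊆ U ∧
      ∀ x ∈ U, x ∉ K → χ x = 0 ∨ (u x - ut x) ^ 2 ≤ τ) :
    ∫⁻ x in U, ENNReal.ofReal (χ x ^ 2 *
        ∑ α : Fin n, (fderiv ℝ (fun z => u z - ut z) x (dir n α)) ^ 2) ≤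
      ENNReal.ofReal (2 * ∫ x in U, R x) := by
  have := isAddHaar_volume n
  set w : Efull n → ℝ := fun z => u z - ut z with hw
  have hwC : ContDiffOn ℝ 2 w U := hu.sub hut
  have hwd : DifferentiableOn ℝ w U := hwC.differentiableOn (by norm_num)
  have hτ : ∀ k : ℕ, (0 : ℝ) < 1 / ((k : ℝ) + 1) := fun k => by positivity
  set f : ℕ → Efull n → ENNReal := fun k x =>
    ENNReal.ofReal (truncg (1 / ((k : ℝ) + 1)) (w x) * (χ x ^ 2 *
      ∑ α : Fin n, (fderiv ℝ w x (dir n α)) ^ 2)) with hf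
  have hle : ∀ k, ∫⁻ x in U, f k x ≤ ENNReal.ofReal (2 * ∫ x in U, R x) := fun k => by
    obtain ⟨K, hKc, hKU, hK0⟩ := hK _ (hτ k)
    exact truncated_energy hU hu hut hc hdc hlap hχ hχ1 hκ hRi hR (hτ k) hKc hKU hK0
  have hw_meas : AEMeasurable w (volume.restrict U) :=
    hwC.continuousOn.aemeasurable hU.measurableSet
  have hfm : ∀ k, AEMeasurable (f k) (volume.restrict U) := fun k => by
    refine AEMeasurable.ennreal_ofReal ?_
    refine ((truncg_continuous (hτ k)).measurable.comp_aemeasurable hw_meas).mul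
      (((hχ.continuous.pow 2).measurable).aemeasurable.mul ?_)
    exact (Finset.measurable_fun_sum _ fun α _ =>
      (measurable_fderiv_apply_const ℝ w (dir n α)).pow_const 2).aemeasurable
  have hlim : ∀ᵐ x ∂(volume.restrict U), Filter.liminf (fun k => f k x) Filter.atTop =
      ENNReal.ofReal (χ x ^ 2 * ∑ α : Fin n, (fderiv ℝ w x (dir n α)) ^ 2) := by
    have hz : ∀ᵐ x : Efull n, ∀ α : Fin n, x ∈ U → w x = 0 → fderiv ℝ w x (dir n α) = 0 :=
      ae_all_iff.2 fun α => ae_fderiv_eq_zero_of_eq_zero volume hU hwd (dir n α)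
    rw [ae_restrict_iff' hU.measurableSet]
    filter_upwards [hz] with x hx hxU
    refine Filter.Tendsto.liminf_eq ?_
    by_cases h0 : w x = 0
    · have : ∑ α : Fin n, (fderiv ℝ w x (dir n α)) ^ 2 = 0 :=
        Finset.sum_eq_zero fun α _ => by rw [hx α hxU h0]; simp
      simp [hf, this]
    · refine ENNReal.tendsto_ofReal ?_
      simpa using (truncg_tendsto h0).mul_const
        (χ x ^ 2 * ∑ α : Fin n, (fderiv ℝ w x (dir n α)) ^ 2)
  calc _ = ∫⁻ x in U, Filter.liminf (fun k => f k x) Filter.atTop :=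
        (lintegral_congr_ae hlim).symm
    _ ≤ Filter.liminf (fun k => ∫⁻ x in U, f k x) Filter.atTop := lintegral_liminf_le' hfm
    _ ≤ _ := by
        refine Filter.liminf_le_of_frequently_le' ?_
        exact (Filter.Eventually.of_forall hle).frequently

/-! ### The `C²`-norm on the closed unit ball -/

/-- The supremum in `C2norm` is over a bounded set. At points of the unit sphere `fderiv` is either
the junk value `0` or agrees with the derivative within the closed ball, which is continuous. -/
lemma C2norm_bddAbove {n : ℕ} {f : Ep n → ℝ} (hf : ContDiffOn ℝ 2 f (closedBall 0 1)) :
    BddAbove (Set.range fun y : closedBall (0 : Ep n) 1 =>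
      ‖f (y : Ep n)‖ + ‖fderiv ℝ f (y : Ep n)‖ + ‖fderiv ℝ (fderiv ℝ f) (y : Ep n)‖) := by
  set B : Set (Ep n) := closedBall 0 1 with hB
  have hconv : Convex ℝ B := convex_closedBall 0 1
  have hint : (interior B).Nonempty :=
    ⟨0, mem_interior_iff_mem_nhds.2 (closedBall_mem_nhds _ one_pos)⟩
  have huB : UniqueDiffOn ℝ B := uniqueDiffOn_convex hconv hint
  set f1 := fderivWithin ℝ f B with hf1
  have hf1C : ContDiffOn ℝ 1 f1 B := hf.fderivWithin huB (by norm_num)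
  set f2 := fderivWithin ℝ f1 B with hf2
  have hf2C : ContinuousOn f2 B := hf1C.continuousOn_fderivWithin huB (by norm_num)
  have hcomp : IsCompact B := isCompact_closedBall 0 1
  obtain ⟨c0, hc0⟩ := hcomp.exists_bound_of_continuousOn hf.continuousOn
  obtain ⟨c1, hc1⟩ := hcomp.exists_bound_of_continuousOn hf1C.continuousOn
  obtain ⟨c2, hc2⟩ := hcomp.exists_bound_of_continuousOn (f := f2) hf2C
  have hball : ∀ z ∈ ball (0 : Ep n) 1, fderiv ℝ f z = f1 z := fun z hz => by
    have : B ∈ nhds z := Filter.mem_of_superset (isOpen_ball.mem_nhds hz) ball_subset_closedBall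
    rw [hf1, fderivWithin_of_mem_nhds this]
  have key1 : ∀ y ∈ B, ‖fderiv ℝ f y‖ ≤ c1 := fun y hy => by
    by_cases hd : DifferentiableAt ℝ f y
    · rw [← hd.fderivWithin (huB y hy)]
      exact hc1 y hy
    · rw [fderiv_zero_of_not_differentiableAt hd, norm_zero]
      exact (norm_nonneg _).trans (hc1 y hy)
  have key2 : ∀ y ∈ B, ‖fderiv ℝ (fderiv ℝ f) y‖ ≤ c2 := fun y hy => by
    by_cases hd : DifferentiableAt ℝ (fderiv ℝ f) y
    · have hycl : y ∈ closure (ball (0 : Ep n) 1) := by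
        rw [closure_ball _ one_ne_zero]; exact hy
      have hub : UniqueDiffWithinAt ℝ (ball (0 : Ep n) 1) y :=
        uniqueDiffWithinAt_convex (convex_ball 0 1)
          ⟨0, by rw [interior_eq_iff_isOpen.2 isOpen_ball]; simp⟩ hycl
      have hne : (nhdsWithin y (ball (0 : Ep n) 1)).NeBot := mem_closure_iff_nhdsWithin_neBot.1 hycl
      have hEq : Set.EqOn (fderiv ℝ f) f1 (ball 0 1) := hball
      have hval : fderiv ℝ f y = f1 y := by
        have t1 : Filter.Tendsto (fderiv ℝ f) (nhdsWithin y (ball 0 1)) (nhds (fderiv ℝ f y)) :=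
          hd.continuousAt.tendsto.mono_left nhdsWithin_le_nhds
        have t2 : Filter.Tendsto f1 (nhdsWithin y (ball 0 1)) (nhds (f1 y)) :=
          (hf1C.continuousOn y hy).tendsto.mono_left (nhdsWithin_mono y ball_subset_closedBall)
        exact tendsto_nhds_unique (t1.congr' (hEq.eventuallyEq_nhdsWithin)) t2
      have d1 : HasFDerivWithinAt f1 (fderiv ℝ (fderiv ℝ f) y) (ball 0 1) y :=
        hd.hasFDerivAt.hasFDerivWithinAt.congr (fun z hz => (hball z hz).symm) hval.symm
      have d2 : HasFDerivWithinAt f1 (f2 y) (ball 0 1) y :=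
        ((hf1C.differentiableOn (by norm_num)) y hy).hasFDerivWithinAt.mono
          ball_subset_closedBall
      rw [hub.eq d1 d2]
      exact hc2 y hy
    · rw [fderiv_zero_of_not_differentiableAt hd]
      refine (norm_zero (E := Ep n →L[ℝ] Ep n →L[ℝ] ℝ)).le.trans ((norm_nonneg (f2 y)).trans (hc2 y hy))
  refine ⟨c0 + c1 + c2, ?_⟩
  rintro _ ⟨⟨y, hy⟩, rfl⟩
  exact add_le_add (add_le_add (hc0 y hy) (key1 y hy)) (key2 y hy)

lemma le_C2norm {n : ℕ} {f : Ep n → ℝ} (hf : ContDiffOn ℝ 2 f (closedBall 0 1)) {y : Ep n}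
    (hy : ‖y‖ ≤ 1) :
    ‖f y‖ + ‖fderiv ℝ f y‖ + ‖fderiv ℝ (fderiv ℝ f) y‖ ≤ C2norm n f :=
  le_ciSup (C2norm_bddAbove hf) (⟨y, by simpa using hy⟩ : closedBall (0 : Ep n) 1)

lemma norm_le_C2norm {n : ℕ} {f : Ep n → ℝ} (hf : ContDiffOn ℝ 2 f (closedBall 0 1)) {y : Ep n}
    (hy : ‖y‖ ≤ 1) : |f y| ≤ C2norm n f := by
  have := le_C2norm hf hy
  rw [← Real.norm_eq_abs]
  linarith [norm_nonneg (fderiv ℝ f y), norm_nonneg (fderiv ℝ (fderiv ℝ f) y)]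

lemma fderiv_le_C2norm {n : ℕ} {f : Ep n → ℝ} (hf : ContDiffOn ℝ 2 f (closedBall 0 1)) {y : Ep n}
    (hy : ‖y‖ ≤ 1) : ‖fderiv ℝ f y‖ ≤ C2norm n f := by
  have := le_C2norm hf hy
  linarith [norm_nonneg (f y), norm_nonneg (fderiv ℝ (fderiv ℝ f) y)]

lemma C2norm_nonneg {n : ℕ} {f : Ep n → ℝ} (hf : ContDiffOn ℝ 2 f (closedBall 0 1)) :
    0 ≤ C2norm n f :=
  (abs_nonneg _).trans (norm_le_C2norm hf (y := 0) (by simp))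

lemma fderiv_le_C2norm_mul_norm {n : ℕ} {f : Ep n → ℝ} (hf : ContDiffOn ℝ 2 f (closedBall 0 1))
    (h0 : fderiv ℝ f 0 = 0) {y : Ep n} (hy : ‖y‖ < 1) :
    ‖fderiv ℝ f y‖ ≤ C2norm n f * ‖y‖ := by
  have hC : ContDiffOn ℝ 1 (fderiv ℝ f) (ball 0 1) :=
    (hf.mono ball_subset_closedBall).fderiv_of_isOpen isOpen_ball (by norm_num)
  have := (convex_ball (0 : Ep n) 1).norm_image_sub_le_of_norm_fderiv_le (𝕜 := ℝ)
    (f := fderiv ℝ f) (C := C2norm n f) (x := 0) (y := y)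
    (fun z hz => (hC.differentiableOn (by norm_num)).differentiableAt (isOpen_ball.mem_nhds hz))
    (fun z hz => by
      have := le_C2norm hf (y := z) (by simpa using (mem_ball_zero_iff.1 hz).le)
      linarith [norm_nonneg (f z), norm_nonneg (fderiv ℝ f z)])
    (by simp) (by simpa using hy)
  simpa [h0] using this

/-! ### Coordinate directions -/

lemma dir_of_lt {n : ℕ} {α : Fin n} (h : (α : ℕ) < n - 1) :
    dir n α = (EuclideanSpace.single (⟨(α : ℕ), h⟩ : Fin (n - 1)) 1, (0 : ℝ)) := by
  simp [dir, h]

lemma dir_of_not_lt {n : ℕ} {α : Fin n} (h : ¬ (α : ℕ) < n - 1) : dir n α = (0, 1) := by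
  simp [dir, h]

lemma norm_dir_fst_le {n : ℕ} (α : Fin n) : ‖(dir n α).1‖ ≤ 1 := by
  by_cases h : (α : ℕ) < n - 1
  · simp [dir_of_lt h]
  · simp [dir_of_not_lt h]

/-- Every vector is a combination of the coordinate directions, with coefficients bounded by its
norm. -/
lemma exists_dir_decomp {n : ℕ} (hn : 2 ≤ n) (x : Efull n) :
    ∃ a : Fin n → ℝ, (∀ α, |a α| ≤ ‖x‖) ∧ x = ∑ α, a α • dir n α := by
  obtain ⟨m, rfl⟩ : ∃ m, n = m + 1 := ⟨n - 1, by omega⟩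
  refine ⟨fun α => if h : (α : ℕ) < m + 1 - 1 then x.1 ⟨α, h⟩ else x.2, fun α => ?_, ?_⟩
  · dsimp only
    split_ifs with h
    · exact (PiLp.norm_apply_le x.1 ⟨α, h⟩).trans (norm_fst_le x)
    · exact norm_snd_le x
  · rw [Fin.sum_univ_castSucc]
    have h1 : ∀ i : Fin m, dir (m + 1) i.castSucc = (EuclideanSpace.single (i : Fin m) 1, (0 : ℝ)) :=
      fun i => dir_of_lt (α := i.castSucc) (by simp)
    have h2 : dir (m + 1) (Fin.last m) = (0, 1) := dir_of_not_lt (by simp)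
    have h3 : ∀ i : Fin m, ((i.castSucc : Fin (m + 1)) : ℕ) < m + 1 - 1 := fun i => by simp
    have h4 : ¬ ((Fin.last m : Fin (m + 1)) : ℕ) < m + 1 - 1 := by simp
    simp only [h2, h3, h4, dif_pos, dif_neg, not_false_eq_true]
    ext j
    · simp [Prod.fst_sum, h1]
      change x.1 j = ∑ i : Fin m, x.1 i * (Pi.single i (1 : ℝ) : Fin m → ℝ) j
      have key : ∀ (f : Fin m → ℝ) (k : Fin m),
          f k = ∑ i : Fin m, f i * (Pi.single i (1 : ℝ) : Fin m → ℝ) k := fun f k => by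
        simp [Pi.single_apply]
      exact key x.1 j
    · simp [Prod.snd_sum, h1]

/-- The factor `n` accounts for the norm on `ℝ^{n-1} × ℝ` being the maximum of the two norms rather
than the Euclidean one. -/
lemma norm_sq_le_sum_dir {n : ℕ} (hn : 2 ≤ n) (L : Efull n →L[ℝ] ℝ) :
    ‖L‖ ^ 2 ≤ n * ∑ α : Fin n, (L (dir n α)) ^ 2 := by
  have h1 : ‖L‖ ≤ ∑ α : Fin n, |L (dir n α)| := by
    refine L.opNorm_le_bound (Finset.sum_nonneg fun _ _ => abs_nonneg _) fun x => ?_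
    obtain ⟨a, ha, hx⟩ := exists_dir_decomp hn x
    calc ‖L x‖ = |∑ α, a α * L (dir n α)| := by
          conv_lhs => rw [hx]
          simp
      _ ≤ ∑ α, |a α * L (dir n α)| := Finset.abs_sum_le_sum_abs _ _
      _ ≤ ∑ α, |L (dir n α)| * ‖x‖ := Finset.sum_le_sum fun α _ => by
          rw [abs_mul, mul_comm]
          exact mul_le_mul_of_nonneg_left (ha α) (abs_nonneg _)
      _ = _ := by rw [Finset.sum_mul]
  calc ‖L‖ ^ 2 ≤ (∑ α : Fin n, |L (dir n α)|) ^ 2 := pow_le_pow_left₀ (norm_nonneg _) h1 2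
    _ ≤ n * ∑ α : Fin n, |L (dir n α)| ^ 2 := by
        simpa using sq_sum_le_card_mul_sum_sq (s := Finset.univ) (f := fun α : Fin n => |L (dir n α)|)
    _ = _ := by simp only [sq_abs]

/-! ### The narrow region and the auxiliary function -/

lemma contDiffOn_comp_fst {n : ℕ} {f : Ep n → ℝ} (hf : ContDiffOn ℝ 2 f (closedBall 0 1)) :
    ContDiffOn ℝ 2 (fun x : Efull n => f x.1) {x | ‖x.1‖ < 1} :=
  hf.comp contDiff_fst.contDiffOn fun x (hx : ‖x.1‖ < 1) => by simpa using hx.le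

lemma continuousOn_comp_fst {n : ℕ} {f : Ep n → ℝ} (hf : ContDiffOn ℝ 2 f (closedBall 0 1)) :
    ContinuousOn (fun x : Efull n => f x.1) {x | ‖x.1‖ ≤ 1} :=
  hf.continuousOn.comp continuous_fst.continuousOn fun x (hx : ‖x.1‖ ≤ 1) => by simpa using hx

lemma isOpen_cylinder (n : ℕ) : IsOpen {x : Efull n | ‖x.1‖ < 1} :=
  isOpen_lt (by fun_prop) continuous_const

lemma isOpen_Omega {n : ℕ} {ε : ℝ} {h1 h2 : Ep n → ℝ}
    (hh1 : ContDiffOn ℝ 2 h1 (closedBall 0 1)) (hh2 : ContDiffOn ℝ 2 h2 (closedBall 0 1)) :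
    IsOpen (Omega n ε h1 h2 1) := by
  have hc1 : ContinuousOn (fun x : Efull n => ε / 2 + h1 x.1 - x.2) {x | ‖x.1‖ < 1} :=
    (continuousOn_const.add (contDiffOn_comp_fst hh1).continuousOn).sub continuous_snd.continuousOn
  have hc2 : ContinuousOn (fun x : Efull n => x.2 - (-ε / 2 + h2 x.1)) {x | ‖x.1‖ < 1} :=
    continuous_snd.continuousOn.sub
      (continuousOn_const.add (contDiffOn_comp_fst hh2).continuousOn)
  have o1 := hc1.isOpen_inter_preimage (isOpen_cylinder n) isOpen_Ioi (t := Set.Ioi 0)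
  have o2 := hc2.isOpen_inter_preimage (isOpen_cylinder n) isOpen_Ioi (t := Set.Ioi 0)
  convert o1.inter o2 using 1
  ext x
  change (‖x.1‖ < 1 ∧ -ε / 2 + h2 x.1 < x.2 ∧ x.2 < ε / 2 + h1 x.1) ↔
    (‖x.1‖ < 1 ∧ 0 < ε / 2 + h1 x.1 - x.2) ∧ (‖x.1‖ < 1 ∧ 0 < x.2 - (-ε / 2 + h2 x.1))
  simp only [sub_pos]
  tauto

lemma util_contDiffOn {n : ℕ} {ε : ℝ} {h1 h2 φ ψ : Ep n → ℝ}
    (hh1 : ContDiffOn ℝ 2 h1 (closedBall 0 1)) (hh2 : ContDiffOn ℝ 2 h2 (closedBall 0 1))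
    (hφ : ContDiffOn ℝ 2 φ (closedBall 0 1)) (hψ : ContDiffOn ℝ 2 ψ (closedBall 0 1))
    (hpos : ∀ y : Ep n, ‖y‖ ≤ 1 → 0 < ε + h1 y - h2 y) :
    ContDiffOn ℝ 2 (util n ε h1 h2 φ ψ) {x | ‖x.1‖ < 1} := by
  have hub : ContDiffOn ℝ 2 (ubar n ε h1 h2) {x | ‖x.1‖ < 1} :=
    ((contDiff_snd.contDiffOn.sub (contDiffOn_comp_fst hh2)).add contDiffOn_const).div
      ((contDiffOn_const.add (contDiffOn_comp_fst hh1)).sub (contDiffOn_comp_fst hh2))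
      fun x (hx : ‖x.1‖ < 1) => (hpos x.1 hx.le).ne'
  exact ((contDiffOn_comp_fst hφ).mul hub).add
    ((contDiffOn_comp_fst hψ).mul (contDiffOn_const.sub hub))

lemma util_continuousOn {n : ℕ} {ε : ℝ} {h1 h2 φ ψ : Ep n → ℝ}
    (hh1 : ContDiffOn ℝ 2 h1 (closedBall 0 1)) (hh2 : ContDiffOn ℝ 2 h2 (closedBall 0 1))
    (hφ : ContDiffOn ℝ 2 φ (closedBall 0 1)) (hψ : ContDiffOn ℝ 2 ψ (closedBall 0 1))
    (hpos : ∀ y : Ep n, ‖y‖ ≤ 1 → 0 < ε + h1 y - h2 y) :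
    ContinuousOn (util n ε h1 h2 φ ψ) {x | ‖x.1‖ ≤ 1} := by
  have hub : ContinuousOn (ubar n ε h1 h2) {x | ‖x.1‖ ≤ 1} :=
    ((continuous_snd.continuousOn.sub (continuousOn_comp_fst hh2)).add continuousOn_const).div
      ((continuousOn_const.add (continuousOn_comp_fst hh1)).sub (continuousOn_comp_fst hh2))
      fun x (hx : ‖x.1‖ ≤ 1) => (hpos x.1 hx).ne'
  exact ((continuousOn_comp_fst hφ).mul hub).add
    ((continuousOn_comp_fst hψ).mul (continuousOn_const.sub hub))

lemma ubar_mem_Ioo {n : ℕ} {ε : ℝ} {h1 h2 : Ep n → ℝ} {x : Efull n}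
    (hx : x ∈ Omega n ε h1 h2 1) : ubar n ε h1 h2 x ∈ Set.Ioo (0 : ℝ) 1 := by
  obtain ⟨-, ha, hb⟩ := hx
  have hD : 0 < ε + h1 x.1 - h2 x.1 := by linarith
  constructor
  · exact div_pos (by linarith) hD
  · rw [ubar, div_lt_one hD]; linarith

lemma abs_util_le {n : ℕ} {ε : ℝ} {h1 h2 φ ψ : Ep n → ℝ}
    (hφ : ContDiffOn ℝ 2 φ (closedBall 0 1)) (hψ : ContDiffOn ℝ 2 ψ (closedBall 0 1))
    {x : Efull n} (hx : x ∈ Omega n ε h1 h2 1) :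
    |util n ε h1 h2 φ ψ x| ≤ C2norm n φ + C2norm n ψ := by
  obtain ⟨h0, h1'⟩ := ubar_mem_Ioo hx
  have e1 := norm_le_C2norm hφ (y := x.1) hx.1.le
  have e2 := norm_le_C2norm hψ (y := x.1) hx.1.le
  rw [util]
  refine (abs_add_le _ _).trans (add_le_add ?_ ?_)
  · rw [abs_mul, abs_of_pos h0]
    nlinarith [abs_nonneg (φ x.1)]
  · rw [abs_mul, abs_of_pos (by linarith : (0 : ℝ) < 1 - ubar n ε h1 h2 x)]
    nlinarith [abs_nonneg (ψ x.1)]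

/-- Directional derivatives of `ũ`, from the product and quotient rules along a line. -/
lemma fderiv_util_apply {n : ℕ} {ε : ℝ} {h1 h2 φ ψ : Ep n → ℝ}
    (hh1 : ContDiffOn ℝ 2 h1 (closedBall 0 1)) (hh2 : ContDiffOn ℝ 2 h2 (closedBall 0 1))
    (hφ : ContDiffOn ℝ 2 φ (closedBall 0 1)) (hψ : ContDiffOn ℝ 2 ψ (closedBall 0 1))
    (hpos : ∀ y : Ep n, ‖y‖ ≤ 1 → 0 < ε + h1 y - h2 y) {x : Efull n} (hx : ‖x.1‖ < 1)
    (v : Efull n) :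
    fderiv ℝ (util n ε h1 h2 φ ψ) x v =
      fderiv ℝ φ x.1 v.1 * ubar n ε h1 h2 x + fderiv ℝ ψ x.1 v.1 * (1 - ubar n ε h1 h2 x) +
      (φ x.1 - ψ x.1) *
        (((v.2 - fderiv ℝ h2 x.1 v.1) -
          ubar n ε h1 h2 x * (fderiv ℝ h1 x.1 v.1 - fderiv ℝ h2 x.1 v.1)) /
            (ε + h1 x.1 - h2 x.1)) := by
  have hD := hpos x.1 hx.le
  have hline1 : HasDerivAt (fun t : ℝ => x.1 + t • v.1) v.1 0 := by
    simpa using ((hasDerivAt_id (0 : ℝ)).smul_const v.1).const_add x.1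
  have hline : HasDerivAt (fun t : ℝ => x + t • v) v 0 := by
    simpa using ((hasDerivAt_id (0 : ℝ)).smul_const v).const_add x
  have hline2 : HasDerivAt (fun t : ℝ => x.2 + t • v.2) v.2 0 := by
    simpa using ((hasDerivAt_id (0 : ℝ)).smul_const v.2).const_add x.2
  have hcomp : ∀ {f : Ep n → ℝ}, ContDiffOn ℝ 2 f (closedBall 0 1) →
      HasDerivAt (fun t : ℝ => f (x.1 + t • v.1)) (fderiv ℝ f x.1 v.1) 0 := fun {f} hf => by
    have hd : HasFDerivAt f (fderiv ℝ f x.1) (x.1 + (0 : ℝ) • v.1) := by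
      rw [zero_smul, add_zero]
      have : closedBall (0 : Ep n) 1 ∈ nhds x.1 :=
        Filter.mem_of_superset (isOpen_ball.mem_nhds (by simpa using hx)) ball_subset_closedBall
      exact ((hf.differentiableOn (by norm_num)).differentiableAt this).hasFDerivAt
    exact hd.comp_hasDerivAt 0 hline1
  have hU : HasDerivAt (fun t : ℝ => ubar n ε h1 h2 (x + t • v))
      (((v.2 - fderiv ℝ h2 x.1 v.1) -
          ubar n ε h1 h2 x * (fderiv ℝ h1 x.1 v.1 - fderiv ℝ h2 x.1 v.1)) /
            (ε + h1 x.1 - h2 x.1)) 0 := by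
    have := ((hline2.sub (hcomp hh2)).add_const (ε / 2)).div
      (((hcomp hh1).const_add ε).sub (hcomp hh2)) (by simpa using hD.ne')
    refine HasDerivAt.congr_deriv (f := fun t : ℝ => ubar n ε h1 h2 (x + t • v)) this ?_
    simp only [Pi.sub_apply, zero_smul, add_zero, ubar]
    field_simp
  have hT := ((hcomp hφ).mul hU).add ((hcomp hψ).mul (hU.const_sub 1))
  have hF : HasDerivAt (fun t : ℝ => util n ε h1 h2 φ ψ (x + t • v))
      (fderiv ℝ (util n ε h1 h2 φ ψ) x v) 0 := by
    have hd : HasFDerivAt (util n ε h1 h2 φ ψ) (fderiv ℝ (util n ε h1 h2 φ ψ) x)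
        (x + (0 : ℝ) • v) := by
      rw [zero_smul, add_zero]
      exact (((util_contDiffOn hh1 hh2 hφ hψ hpos).differentiableOn
        (by norm_num)).differentiableAt ((isOpen_cylinder n).mem_nhds hx)).hasFDerivAt
    exact hd.comp_hasDerivAt 0 hline
  rw [hF.unique hT]
  simp only [zero_smul, add_zero]
  ring

set_option maxHeartbeats 800000 in
/-- Horizontal derivatives of `ũ` are `O(δ^{-1/2})`: the gap `δ` and the graphs have gradient
`O(|x'|)`, and `|x'| / δ ≲ δ^{-1/2}`. -/
lemma fderiv_util_horizontal_sq_le {n : ℕ} {ε κ0 κ1 C₀ : ℝ} {h1 h2 φ ψ : Ep n → ℝ}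
    (hε : ε ∈ Set.Ioo (0 : ℝ) 1) (hC₀ : 1 ≤ C₀)
    (hG : HGeom n ε κ0 κ1 h1 h2) (hDC : DeltaComp n ε C₀ h1 h2)
    (hφ : ContDiffOn ℝ 2 φ (closedBall 0 1)) (hψ : ContDiffOn ℝ 2 ψ (closedBall 0 1))
    {x : Efull n} (hx : x ∈ Omega n ε h1 h2 1) {v : Ep n} (hv : ‖v‖ ≤ 1) :
    (fderiv ℝ (util n ε h1 h2 φ ψ) x (v, 0)) ^ 2 ≤
      (4 + 8 * κ1 ^ 2 * C₀ ^ 2) * (C2norm n φ + C2norm n ψ) ^ 2 * (ε + ‖x.1‖ ^ 2)⁻¹ := by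
  obtain ⟨hh1, hh2, hsep, -, -, hd1, hd2, -, hκ⟩ := hG
  obtain ⟨hε0, hε1⟩ := hε
  have hxr : ‖x.1‖ < 1 := hx.1
  have hpos : ∀ y : Ep n, ‖y‖ ≤ 1 → 0 < ε + h1 y - h2 y := fun y hy => by
    linarith [hsep y hy]
  rw [fderiv_util_apply hh1 hh2 hφ hψ hpos hxr]
  obtain ⟨hu0, hu1⟩ := ubar_mem_Ioo hx
  set U := ubar n ε h1 h2 x
  set r := ‖x.1‖ with hr
  have hr0 : 0 ≤ r := norm_nonneg _
  set q := ε + r ^ 2 with hq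
  have hq0 : 0 < q := by positivity
  have hq2 : q ≤ 2 := by nlinarith
  have hD := hpos x.1 hxr.le
  have hDq : q / C₀ ≤ ε + h1 x.1 - h2 x.1 := (hDC x.1 hxr.le).1
  set D := ε + h1 x.1 - h2 x.1
  have happ : ∀ L : Ep n →L[ℝ] ℝ, |L v| ≤ ‖L‖ := fun L =>
    (L.le_opNorm v).trans (mul_le_of_le_one_right (norm_nonneg _) hv)
  have a1 : |fderiv ℝ h1 x.1 v| ≤ C2norm n h1 * r :=
    (happ _).trans (fderiv_le_C2norm_mul_norm hh1 hd1 hxr)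
  have a2 : |fderiv ℝ h2 x.1 v| ≤ C2norm n h2 * r :=
    (happ _).trans (fderiv_le_C2norm_mul_norm hh2 hd2 hxr)
  have n1 := C2norm_nonneg hh1
  have n2 := C2norm_nonneg hh2
  have n3 := C2norm_nonneg hφ
  have n4 := C2norm_nonneg hψ
  have b1 : |fderiv ℝ φ x.1 v| ≤ C2norm n φ := (happ _).trans (fderiv_le_C2norm hφ hxr.le)
  have b2 : |fderiv ℝ ψ x.1 v| ≤ C2norm n ψ := (happ _).trans (fderiv_le_C2norm hψ hxr.le)
  have b3 : |φ x.1| ≤ C2norm n φ := norm_le_C2norm hφ hxr.le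
  have b4 : |ψ x.1| ≤ C2norm n ψ := norm_le_C2norm hψ hxr.le
  set M := C2norm n φ + C2norm n ψ with hM
  set S := ((0 : ℝ) - fderiv ℝ h2 x.1 v) - U * (fderiv ℝ h1 x.1 v - fderiv ℝ h2 x.1 v) with hS
  change (fderiv ℝ φ x.1 v * U + fderiv ℝ ψ x.1 v * (1 - U) + (φ x.1 - ψ x.1) * (S / D)) ^ 2 ≤ _
  -- `S` is minus a convex combination of the derivatives of `h2` and `h1`
  have hSabs : |S| ≤ κ1 * r := by
    have e : S = -((1 - U) * fderiv ℝ h2 x.1 v + U * fderiv ℝ h1 x.1 v) := by rw [hS]; ring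
    rw [e, abs_neg]
    refine (abs_add_le _ _).trans ?_
    rw [abs_mul, abs_mul, abs_of_pos hu0, abs_of_pos (by linarith : 0 < 1 - U)]
    have : (1 - U) * |fderiv ℝ h2 x.1 v| ≤ |fderiv ℝ h2 x.1 v| :=
      mul_le_of_le_one_left (abs_nonneg _) (by linarith)
    have : U * |fderiv ℝ h1 x.1 v| ≤ |fderiv ℝ h1 x.1 v| :=
      mul_le_of_le_one_left (abs_nonneg _) (by linarith)
    nlinarith
  have hSD : (S / D) ^ 2 ≤ κ1 ^ 2 * C₀ ^ 2 * q⁻¹ := by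
    have hS2 : S ^ 2 ≤ κ1 ^ 2 * q := by
      rw [← sq_abs]
      calc |S| ^ 2 ≤ (κ1 * r) ^ 2 := pow_le_pow_left₀ (abs_nonneg _) hSabs 2
        _ ≤ κ1 ^ 2 * q := by nlinarith [sq_nonneg κ1]
    have hqD : q ^ 2 ≤ C₀ ^ 2 * D ^ 2 := by
      rw [div_le_iff₀ (by linarith)] at hDq
      calc q ^ 2 ≤ (D * C₀) ^ 2 := pow_le_pow_left₀ hq0.le hDq 2
        _ = _ := by ring
    rw [div_pow, div_le_iff₀ (by positivity)]
    calc S ^ 2 ≤ κ1 ^ 2 * q := hS2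
      _ = κ1 ^ 2 * q⁻¹ * q ^ 2 := by field_simp
      _ ≤ κ1 ^ 2 * q⁻¹ * (C₀ ^ 2 * D ^ 2) := mul_le_mul_of_nonneg_left hqD (by positivity)
      _ = _ := by ring
  have hfirst : |fderiv ℝ φ x.1 v * U + fderiv ℝ ψ x.1 v * (1 - U)| ≤ M := by
    refine (abs_add_le _ _).trans (add_le_add ?_ ?_)
    · rw [abs_mul, abs_of_pos hu0]
      exact (mul_le_of_le_one_right (abs_nonneg _) hu1.le).trans b1
    · rw [abs_mul, abs_of_pos (by linarith : 0 < 1 - U)]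
      exact (mul_le_of_le_one_right (abs_nonneg _) (by linarith)).trans b2
  have hfirst2 : (fderiv ℝ φ x.1 v * U + fderiv ℝ ψ x.1 v * (1 - U)) ^ 2 ≤ M ^ 2 := by
    rw [← sq_abs]; exact pow_le_pow_left₀ (abs_nonneg _) hfirst 2
  have hdiff : (φ x.1 - ψ x.1) ^ 2 ≤ M ^ 2 := by
    rw [← sq_abs]
    exact pow_le_pow_left₀ (abs_nonneg _) ((abs_sub _ _).trans (add_le_add b3 b4)) 2
  have hqinv : 1 ≤ 2 * q⁻¹ := by
    rw [← div_eq_mul_inv, one_le_div hq0]; exact hq2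
  have hsecond : ((φ x.1 - ψ x.1) * (S / D)) ^ 2 ≤ M ^ 2 * (κ1 ^ 2 * C₀ ^ 2 * q⁻¹) := by
    rw [mul_pow]
    exact mul_le_mul hdiff hSD (sq_nonneg _) (sq_nonneg _)
  have hM2 : M ^ 2 ≤ M ^ 2 * (2 * q⁻¹) := le_mul_of_one_le_right (sq_nonneg _) hqinv
  have hnn : 0 ≤ M ^ 2 * (κ1 ^ 2 * C₀ ^ 2 * q⁻¹) := by positivity
  refine add_sq_le.trans ?_
  have e : (4 + 8 * κ1 ^ 2 * C₀ ^ 2) * M ^ 2 * q⁻¹ =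
    2 * (M ^ 2 * (2 * q⁻¹)) + 8 * (M ^ 2 * (κ1 ^ 2 * C₀ ^ 2 * q⁻¹)) := by ring
  rw [e]
  linarith

/-- The fibre of `Ω₁` over `x'` has length `δ(x') ≤ C₀ (ε + |x'|²)`, which cancels the weight. -/
lemma lintegral_weight_le {n : ℕ} {ε C₀ : ℝ} {h1 h2 : Ep n → ℝ} (hε : 0 < ε)
    (hO : MeasurableSet (Omega n ε h1 h2 1)) (hDC : DeltaComp n ε C₀ h1 h2) :
    ∫⁻ x in Omega n ε h1 h2 1, ENNReal.ofReal ((ε + ‖x.1‖ ^ 2)⁻¹) ≤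
      ENNReal.ofReal C₀ * volume (ball (0 : Ep n) 1) := by
  have hq : ∀ y : Ep n, 0 < ε + ‖y‖ ^ 2 := fun y => by positivity
  have hcont : Continuous fun x : Efull n => (ε + ‖x.1‖ ^ 2)⁻¹ :=
    Continuous.inv₀ (by fun_prop) fun x => (hq x.1).ne'
  rw [← lintegral_indicator hO, Measure.volume_eq_prod, lintegral_prod _
    ((hcont.measurable.ennreal_ofReal.indicator hO).aemeasurable)]
  calc _ ≤ ∫⁻ y : Ep n, (ball (0 : Ep n) 1).indicator (fun _ => ENNReal.ofReal C₀) y := by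
        refine lintegral_mono fun y => ?_
        by_cases hy : y ∈ ball (0 : Ep n) 1
        · have hy' : ‖y‖ < 1 := by simpa using hy
          rw [Set.indicator_of_mem hy]
          calc ∫⁻ t : ℝ, (Omega n ε h1 h2 1).indicator
                (fun x : Efull n => ENNReal.ofReal ((ε + ‖x.1‖ ^ 2)⁻¹)) (y, t)
              ≤ ∫⁻ t : ℝ, (Set.Ioo (-ε / 2 + h2 y) (ε / 2 + h1 y)).indicator
                (fun _ => ENNReal.ofReal ((ε + ‖y‖ ^ 2)⁻¹)) t := by
                refine lintegral_mono fun t => ?_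
                by_cases ht : (y, t) ∈ Omega n ε h1 h2 1
                · have ht' : t ∈ Set.Ioo (-ε / 2 + h2 y) (ε / 2 + h1 y) := ⟨ht.2.1, ht.2.2⟩
                  rw [Set.indicator_of_mem ht, Set.indicator_of_mem ht']
                · rw [Set.indicator_of_notMem ht]
                  exact zero_le
            _ = ENNReal.ofReal ((ε + ‖y‖ ^ 2)⁻¹) *
                  ENNReal.ofReal (ε / 2 + h1 y - (-ε / 2 + h2 y)) := by
                rw [lintegral_indicator measurableSet_Ioo, setLIntegral_const, Real.volume_Ioo]
            _ ≤ ENNReal.ofReal C₀ := by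
                rw [← ENNReal.ofReal_mul (inv_nonneg.2 (hq y).le)]
                refine ENNReal.ofReal_le_ofReal ?_
                rw [inv_mul_le_iff₀ (hq y)]
                have := (hDC y hy'.le).2
                linarith
        · have : ∀ t : ℝ, (Omega n ε h1 h2 1).indicator
              (fun x : Efull n => ENNReal.ofReal ((ε + ‖x.1‖ ^ 2)⁻¹)) (y, t) = 0 := fun t =>
            Set.indicator_of_notMem (fun h => hy (by simpa using h.1)) _
          simp only [this, lintegral_zero]
          exact zero_le
    _ = _ := by rw [lintegral_indicator measurableSet_ball, setLIntegral_const]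

lemma weight_integrable {n : ℕ} {ε C₀ : ℝ} {h1 h2 : Ep n → ℝ} (hε : 0 < ε) (hC₀ : 1 ≤ C₀)
    (hO : MeasurableSet (Omega n ε h1 h2 1)) (hDC : DeltaComp n ε C₀ h1 h2) :
    IntegrableOn (fun x : Efull n => (ε + ‖x.1‖ ^ 2)⁻¹) (Omega n ε h1 h2 1) ∧
    ∫ x in Omega n ε h1 h2 1, (ε + ‖x.1‖ ^ 2)⁻¹ ≤ C₀ * (volume (ball (0 : Ep n) 1)).toReal := by
  have hq : ∀ x : Efull n, 0 < ε + ‖x.1‖ ^ 2 := fun y => by positivity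
  have hcont : Continuous fun x : Efull n => (ε + ‖x.1‖ ^ 2)⁻¹ :=
    Continuous.inv₀ (by fun_prop) fun x => (hq x).ne'
  have hle := lintegral_weight_le hε hO hDC
  have hfin : ENNReal.ofReal C₀ * volume (ball (0 : Ep n) 1) ≠ ⊤ :=
    ENNReal.mul_ne_top ENNReal.ofReal_ne_top measure_ball_lt_top.ne
  have hnn : ∀ x : Efull n, 0 ≤ (ε + ‖x.1‖ ^ 2)⁻¹ := fun x => inv_nonneg.2 (hq x).le
  constructor
  · refine ⟨hcont.aestronglyMeasurable, ?_⟩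
    rw [hasFiniteIntegral_iff_ofReal (Filter.Eventually.of_forall hnn)]
    exact hle.trans_lt hfin.lt_top
  · rw [integral_eq_lintegral_of_nonneg_ae (Filter.Eventually.of_forall hnn)
      hcont.aestronglyMeasurable]
    refine (ENNReal.toReal_mono hfin hle).trans_eq ?_
    rw [ENNReal.toReal_mul, ENNReal.toReal_ofReal (by linarith)]

lemma exists_cutoff (n : ℕ) : ∃ (η : Ep n → ℝ) (κ : ℝ), ContDiff ℝ 1 η ∧ (∀ y, |η y| ≤ 1) ∧
    (∀ y, ‖y‖ ≤ 1 / 2 → η y = 1) ∧ (∀ y, 3 / 4 ≤ ‖y‖ → η y = 0) ∧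
    ∀ y, ‖fderiv ℝ η y‖ ≤ κ := by
  let f : ContDiffBump (0 : Ep n) := ⟨1 / 2, 3 / 4, by norm_num, by norm_num⟩
  have hf : ContDiff ℝ 1 f := f.contDiff
  obtain ⟨κ, hκ⟩ := (hf.continuous_fderiv (by norm_num)).bounded_above_of_compact_support
    (f.hasCompactSupport.fderiv (𝕜 := ℝ))
  refine ⟨f, κ, hf, fun y => ?_, fun y hy => ?_, fun y hy => ?_, hκ⟩
  · rw [abs_of_nonneg f.nonneg]; exact f.le_one
  · exact f.one_of_mem_closedBall (mem_closedBall_zero_iff.2 hy)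
  · exact f.zero_of_le_dist (by rw [dist_zero_right]; exact hy)

/-- Since `w = u - ũ` is continuous up to the top and bottom of `Ω₁` and vanishes there, the
superlevel sets of `w²` over `|x'| ≤ 3/4` are compact subsets of `Ω₁`. -/
lemma exists_compact_superlevel {n : ℕ} {ε : ℝ} {h1 h2 φ ψ : Ep n → ℝ} {u : Efull n → ℝ}
    (hh1 : ContDiffOn ℝ 2 h1 (closedBall 0 1)) (hh2 : ContDiffOn ℝ 2 h2 (closedBall 0 1))
    (hφ : ContDiffOn ℝ 2 φ (closedBall 0 1)) (hψ : ContDiffOn ℝ 2 ψ (closedBall 0 1))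
    (hpos : ∀ y : Ep n, ‖y‖ ≤ 1 → 0 < ε + h1 y - h2 y)
    (hBV : AttainsBV n ε h1 h2 u φ ψ) {τ : ℝ} (hτ : 0 < τ) :
    ∃ K : Set (Efull n), IsCompact K ∧ K ⊆ Omega n ε h1 h2 1 ∧
      ∀ x ∈ Omega n ε h1 h2 1, x ∉ K →
        3 / 4 ≤ ‖x.1‖ ∨ (u x - util n ε h1 h2 φ ψ x) ^ 2 ≤ τ := by
  obtain ⟨hcont, hbv⟩ := hBV
  set P : Efull n → Efull n := fun z => (z.1, -ε / 2 + h2 z.1 + z.2 * (ε + h1 z.1 - h2 z.1))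
    with hP
  set Q : Set (Efull n) := closedBall (0 : Ep n) (3 / 4) ×ˢ Set.Icc (0 : ℝ) 1 with hQ
  have hQ1 : Q ⊆ {x | ‖x.1‖ ≤ 1} := fun z hz => by
    have : ‖z.1‖ ≤ 3 / 4 := by simpa using hz.1
    change ‖z.1‖ ≤ 1
    linarith
  have hPc : ContinuousOn P Q := by
    have c1 := (continuousOn_comp_fst hh1).mono hQ1
    have c2 := (continuousOn_comp_fst hh2).mono hQ1
    exact continuous_fst.continuousOn.prodMk ((continuousOn_const.add c2).add
      (continuous_snd.continuousOn.mul ((continuousOn_const.add c1).sub c2)))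
  set S : Set (Efull n) := P '' Q with hS
  have hSc : IsCompact S :=
    ((isCompact_closedBall (0 : Ep n) (3 / 4)).prod isCompact_Icc).image_of_continuousOn hPc
  -- each point of the closed strip lies on the bottom, on the top, or in the region
  have hcases : ∀ x ∈ S, ‖x.1‖ ≤ 1 ∧
      (x = (x.1, -ε / 2 + h2 x.1) ∨ x = (x.1, ε / 2 + h1 x.1) ∨ x ∈ Omega n ε h1 h2 1) := by
    rintro _ ⟨⟨y, t⟩, ⟨hy, ht0, ht1⟩, rfl⟩
    have hy' : ‖y‖ ≤ 3 / 4 := by simpa using hy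
    have hD := hpos y (by linarith)
    simp only at ht0 ht1
    refine ⟨by simp only [hP]; linarith, ?_⟩
    rcases ht0.eq_or_lt with h | h
    · left; simp [hP, ← h]
    rcases ht1.eq_or_lt with h' | h'
    · right; left
      simp only [hP, h', Prod.mk.injEq, true_and]
      ring
    · right; right
      refine ⟨by simp only [hP]; linarith, ?_, ?_⟩ <;> simp only [hP] <;> nlinarith
  have hSsub : S ⊆ Omega n ε h1 h2 1 ∪ Gammap n ε h1 1 ∪ Gammam n ε h2 1 := fun x hx => by
    obtain ⟨hx1, h | h | h⟩ := hcases x hx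
    · exact Or.inr ⟨hx1, by rw [h]⟩
    · exact Or.inl (Or.inr ⟨hx1, by rw [h]⟩)
    · exact Or.inl (Or.inl h)
  have hwc : ContinuousOn (fun x => (u x - util n ε h1 h2 φ ψ x) ^ 2) S :=
    ((hcont.mono hSsub).sub ((util_continuousOn hh1 hh2 hφ hψ hpos).mono
      fun x hx => (hcases x hx).1)).pow 2
  refine ⟨S ∩ (fun x => (u x - util n ε h1 h2 φ ψ x) ^ 2) ⁻¹' Set.Ici τ, ?_, ?_, ?_⟩
  · exact hSc.of_isClosed_subset (hwc.preimage_isClosed_of_isClosed hSc.isClosed isClosed_Ici)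
      Set.inter_subset_left
  · rintro x ⟨hxS, hxτ⟩
    have hxτ' : τ ≤ (u x - util n ε h1 h2 φ ψ x) ^ 2 := hxτ
    obtain ⟨hx1, h | h | h⟩ := hcases x hxS
    · exfalso
      have e : util n ε h1 h2 φ ψ (x.1, -ε / 2 + h2 x.1) = ψ x.1 := by
        have : ubar n ε h1 h2 (x.1, -ε / 2 + h2 x.1) = 0 := by
          simp only [ubar]; rw [div_eq_zero_iff]; left; ring
        simp [util, this]
      rw [h, (hbv x.1 hx1).2, e] at hxτ'
      norm_num at hxτ'
      linarith
    · exfalso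
      have e : util n ε h1 h2 φ ψ (x.1, ε / 2 + h1 x.1) = φ x.1 := by
        have : ubar n ε h1 h2 (x.1, ε / 2 + h1 x.1) = 1 := by
          simp only [ubar]; rw [div_eq_one_iff_eq (hpos x.1 hx1).ne']; ring
        simp [util, this]
      rw [h, (hbv x.1 hx1).1, e] at hxτ'
      norm_num at hxτ'
      linarith
    · exact h
  · intro x hx hxK
    by_cases hr : 3 / 4 ≤ ‖x.1‖
    · exact Or.inl hr
    · right
      by_contra hcon
      refine hxK ⟨⟨(x.1, ubar n ε h1 h2 x), ⟨?_, ?_⟩, ?_⟩, (not_le.1 hcon).le⟩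
      · simpa using (not_le.1 hr).le
      · exact Set.Ioo_subset_Icc_self (ubar_mem_Ioo hx)
      · have hD := hpos x.1 hx.1.le
        refine Prod.ext rfl ?_
        simp only [hP, ubar]
        rw [div_mul_cancel₀ _ hD.ne']
        ring

/-! ### The global energy estimate -/

set_option maxHeartbeats 1000000 in
theorem stmt13 (n : ℕ) (hn : 2 ≤ n) (κ0 κ1 C₀ : ℝ)
    (hκ0 : 0 < κ0) (hκ1 : 0 < κ1) (hC₀ : 1 ≤ C₀) :
    ∃ C : ℝ, 0 < C ∧
    ∀ ε ∈ Set.Ioo (0:ℝ) 1, ∀ h1 h2 : Ep n → ℝ,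
      HGeom n ε κ0 κ1 h1 h2 → DeltaComp n ε C₀ h1 h2 →
    ∀ (u : Efull n → ℝ) (φ ψ : Ep n → ℝ),
      ContDiffOn ℝ 2 φ (closedBall 0 1) → ContDiffOn ℝ 2 ψ (closedBall 0 1) →
      HarmBV n ε h1 h2 u φ ψ →
      (∫ x in Omega n ε h1 h2 (1/2),
          ‖fderiv ℝ (fun z => u z - util n ε h1 h2 φ ψ z) x‖^2) ≤
        C * ((∫ x in Omega n ε h1 h2 1, ‖u x - util n ε h1 h2 φ ψ x‖^2) +
          (C2norm n φ)^2 + (C2norm n ψ)^2) := by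
  obtain ⟨η, κ, hη, hη1, hη_one, hη_zero, hηκ⟩ := exists_cutoff n
  set V : ℝ := (volume (ball (0 : Ep n) 1)).toReal with hV
  have hV0 : 0 ≤ V := ENNReal.toReal_nonneg
  set A : ℝ := 4 + 8 * κ1 ^ 2 * C₀ ^ 2 with hA
  have hA0 : 0 < A := by positivity
  have hn0 : (0 : ℝ) < n := by exact_mod_cast (by omega : 0 < n)
  refine ⟨2 * n * (4 * n * A * C₀ * V + 5 * n * κ ^ 2) + 1, by positivity, ?_⟩
  intro ε hε h1 h2 hG hDC u φ ψ hφ hψ hu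
  obtain ⟨huC, hlap, huI, hBV⟩ := hu
  have hG' := hG
  obtain ⟨hh1, hh2, hsep, -⟩ := hG'
  have hpos : ∀ y : Ep n, ‖y‖ ≤ 1 → 0 < ε + h1 y - h2 y := fun y hy => by
    linarith [hsep y hy]
  set O : Set (Efull n) := Omega n ε h1 h2 1 with hO
  have hOo : IsOpen O := isOpen_Omega hh1 hh2
  have hOc : O ⊆ {x | ‖x.1‖ < 1} := fun x hx => hx.1
  set ut : Efull n → ℝ := util n ε h1 h2 φ ψ with hut
  have hutC : ContDiffOn ℝ 2 ut O := (util_contDiffOn hh1 hh2 hφ hψ hpos).mono hOc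
  have hwC : ContDiffOn ℝ 2 (fun z => u z - ut z) O := huC.sub hutC
  obtain ⟨hqI, hqle⟩ := weight_integrable hε.1 hC₀ hOo.measurableSet hDC
  set M : ℝ := C2norm n φ + C2norm n ψ with hM
  have hq0 : ∀ x : Efull n, 0 < ε + ‖x.1‖ ^ 2 := fun x => by have := hε.1; positivity
  -- `w²` is integrable because `ũ` is bounded and `Ω₁` has finite measure
  have hwI : IntegrableOn (fun x => ‖u x - ut x‖ ^ 2) O := by
    refine Integrable.mono' ((huI.const_mul 2).add (hqI.const_mul (4 * M ^ 2)))
      ((hwC.continuousOn.norm.pow 2).aestronglyMeasurable hOo.measurableSet) ?_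
    refine (ae_restrict_iff' hOo.measurableSet).2 (Filter.Eventually.of_forall fun x hx => ?_)
    have hb : ut x ^ 2 ≤ M ^ 2 := by
      rw [← sq_abs]; exact pow_le_pow_left₀ (abs_nonneg _) (abs_util_le hφ hψ hx) 2
    have hqinv : 1 ≤ 2 * (ε + ‖x.1‖ ^ 2)⁻¹ := by
      rw [← div_eq_mul_inv, one_le_div (hq0 x)]
      have h1x : ‖x.1‖ < 1 := hx.1
      nlinarith [hε.2, norm_nonneg x.1]
    have hMq : M ^ 2 ≤ M ^ 2 * (2 * (ε + ‖x.1‖ ^ 2)⁻¹) :=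
      le_mul_of_one_le_right (sq_nonneg _) hqinv
    simp only [Real.norm_eq_abs, sq_abs, abs_pow, Pi.add_apply]
    nlinarith [sq_nonneg (u x + ut x), sq_nonneg ‖fderiv ℝ u x‖]
  -- the vertical derivative of `ũ`, which does not depend on the vertical variable
  set c0 : Efull n → ℝ := fun x => (φ x.1 - ψ x.1) / (ε + h1 x.1 - h2 x.1) with hc0
  have hc0C : ContDiffOn ℝ 1 c0 O := by
    have : ContDiffOn ℝ 2 c0 {x | ‖x.1‖ < 1} :=
      ((contDiffOn_comp_fst hφ).sub (contDiffOn_comp_fst hψ)).div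
      ((contDiffOn_const.add (contDiffOn_comp_fst hh1)).sub (contDiffOn_comp_fst hh2))
      fun x (hx : ‖x.1‖ < 1) => (hpos x.1 hx.le).ne'
    exact (this.mono hOc).of_le (by norm_num)
  set c : Fin n → Efull n → ℝ := fun α => if (α : ℕ) < n - 1 then fun _ => 0 else c0 with hc
  have hcC : ∀ α, ContDiffOn ℝ 1 (c α) O := fun α => by
    by_cases h : (α : ℕ) < n - 1
    · simp only [hc, if_pos h]; exact contDiffOn_const
    · simp only [hc, if_neg h]; exact hc0C
  have hdc : ∀ α, ∀ x ∈ O, fderiv ℝ (c α) x (dir n α) = 0 := fun α x hx => by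
    by_cases h : (α : ℕ) < n - 1
    · simp [hc, if_pos h]
    · simp only [hc, if_neg h]
      have hd : DifferentiableAt ℝ c0 x :=
        (hc0C.differentiableOn (by norm_num)).differentiableAt (hOo.mem_nhds hx)
      rw [dir_of_not_lt h, ← hd.lineDeriv_eq_fderiv, lineDeriv]
      have : (fun t : ℝ => c0 (x + t • ((0 : Ep n), (1 : ℝ)))) = fun _ => c0 x := by
        funext t
        simp [hc0]
      rw [this]
      simp
  have hca : ∀ α, ∀ x ∈ O, (fderiv ℝ ut x (dir n α) - c α x) ^ 2 ≤
      A * M ^ 2 * (ε + ‖x.1‖ ^ 2)⁻¹ := fun α x hx => by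
    by_cases h : (α : ℕ) < n - 1
    · have := fderiv_util_horizontal_sq_le hε hC₀ hG hDC hφ hψ hx
        (v := EuclideanSpace.single (⟨(α : ℕ), h⟩ : Fin (n - 1)) 1) (by simp)
      simpa only [hc, if_pos h, sub_zero, dir_of_lt h] using this
    · have : fderiv ℝ ut x (dir n α) = c α x := by
        rw [hut, fderiv_util_apply hh1 hh2 hφ hψ hpos hx.1, dir_of_not_lt h]
        simp only [hc, if_neg h, hc0, map_zero]
        ring
      rw [this, sub_self, zero_pow two_ne_zero]
      have := hq0 x
      positivity
  set χ : Efull n → ℝ := fun x => η x.1 with hχ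
  have hχC : ContDiff ℝ 1 χ := hη.comp contDiff_fst
  have hχκ : ∀ x α, |fderiv ℝ χ x (dir n α)| ≤ κ := fun x α => by
    have hd : HasFDerivAt χ ((fderiv ℝ η x.1).comp (ContinuousLinearMap.fst ℝ (Ep n) ℝ)) x :=
      ((hη.differentiable (by norm_num)) x.1).hasFDerivAt.comp x hasFDerivAt_fst
    rw [hd.fderiv]
    calc |fderiv ℝ η x.1 (dir n α).1| ≤ ‖fderiv ℝ η x.1‖ * ‖(dir n α).1‖ :=
          (fderiv ℝ η x.1).le_opNorm _
      _ ≤ ‖fderiv ℝ η x.1‖ := mul_le_of_le_one_right (norm_nonneg _) (norm_dir_fst_le α)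
      _ ≤ κ := hηκ x.1
  set R : Efull n → ℝ := fun x => 2 * n * A * M ^ 2 * (ε + ‖x.1‖ ^ 2)⁻¹ +
    5 * n * κ ^ 2 * ‖u x - ut x‖ ^ 2 with hR
  have hRI : IntegrableOn R O := (hqI.const_mul _).add (hwI.const_mul _)
  have hRle : ∀ x ∈ O, ∑ α : Fin n, (2 * (fderiv ℝ ut x (dir n α) - c α x) ^ 2 +
      5 * (κ ^ 2 * (u x - ut x) ^ 2)) ≤ R x := fun x hx => by
    calc _ ≤ ∑ α : Fin n, (2 * (A * M ^ 2 * (ε + ‖x.1‖ ^ 2)⁻¹) +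
          5 * (κ ^ 2 * (u x - ut x) ^ 2)) :=
          Finset.sum_le_sum fun α _ => by linarith [hca α x hx]
      _ = R x := by
          simp only [Finset.sum_const, Finset.card_univ, Fintype.card_fin, nsmul_eq_mul, hR,
            Real.norm_eq_abs, sq_abs]
          ring
  have henergy := full_energy hOo huC hutC hcC hdc hlap hχC (fun x => hη1 x.1) hχκ hRI hRle
    (fun τ hτ => by
      obtain ⟨K, hK, hKU, hK0⟩ := exists_compact_superlevel hh1 hh2 hφ hψ hpos hBV hτ
      exact ⟨K, hK, hKU, fun x hx hxK => (hK0 x hx hxK).imp_left (hη_zero x.1)⟩)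
  set W : ℝ := ∫ x in O, ‖u x - ut x‖ ^ 2 with hW
  have hW0 : 0 ≤ W := integral_nonneg fun x => sq_nonneg _
  have hRint : ∫ x in O, R x ≤ 2 * n * A * M ^ 2 * (C₀ * V) + 5 * n * κ ^ 2 * W := by
    rw [hR, integral_add (hqI.const_mul _) (hwI.const_mul _), integral_const_mul,
      integral_const_mul]
    gcongr
  have hRint0 : 0 ≤ ∫ x in O, R x := by
    refine integral_nonneg fun x => ?_
    have := hq0 x
    simp only [hR, Pi.zero_apply]
    positivity
  have hhalf : Omega n ε h1 h2 (1 / 2) ⊆ O := fun x hx => ⟨hx.1.trans (by norm_num), hx.2⟩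
  have hhalfm : MeasurableSet (Omega n ε h1 h2 (1 / 2)) := by
    have : Omega n ε h1 h2 (1 / 2) = O ∩ {x | ‖x.1‖ < 1 / 2} := by
      ext x
      constructor
      · exact fun hx => ⟨hhalf hx, hx.1⟩
      · exact fun hx => ⟨hx.2, hx.1.2⟩
    rw [this]
    exact (hOo.inter (isOpen_lt (by fun_prop) continuous_const)).measurableSet
  have hlin : ∫⁻ x in Omega n ε h1 h2 (1 / 2),
      ENNReal.ofReal (‖fderiv ℝ (fun z => u z - ut z) x‖ ^ 2) ≤
      ENNReal.ofReal (n * (2 * ∫ x in O, R x)) := by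
    calc _ ≤ ∫⁻ x in Omega n ε h1 h2 (1 / 2), ENNReal.ofReal n * ENNReal.ofReal (χ x ^ 2 *
          ∑ α : Fin n, (fderiv ℝ (fun z => u z - ut z) x (dir n α)) ^ 2) := by
          refine setLIntegral_mono_ae' hhalfm (Filter.Eventually.of_forall fun x hx => ?_)
          rw [← ENNReal.ofReal_mul hn0.le]
          refine ENNReal.ofReal_le_ofReal ?_
          have : χ x = 1 := hη_one x.1 hx.1.le
          rw [this, one_pow, one_mul]
          exact norm_sq_le_sum_dir hn _
      _ ≤ ∫⁻ x in O, ENNReal.ofReal n * ENNReal.ofReal (χ x ^ 2 *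
          ∑ α : Fin n, (fderiv ℝ (fun z => u z - ut z) x (dir n α)) ^ 2) :=
          lintegral_mono_set hhalf
      _ = ENNReal.ofReal n * ∫⁻ x in O, ENNReal.ofReal (χ x ^ 2 *
          ∑ α : Fin n, (fderiv ℝ (fun z => u z - ut z) x (dir n α)) ^ 2) :=
          lintegral_const_mul' _ _ ENNReal.ofReal_ne_top
      _ ≤ ENNReal.ofReal n * ENNReal.ofReal (2 * ∫ x in O, R x) := by gcongr
      _ = _ := (ENNReal.ofReal_mul hn0.le).symm
  have hmain : ∫ x in Omega n ε h1 h2 (1 / 2), ‖fderiv ℝ (fun z => u z - ut z) x‖ ^ 2 ≤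
      n * (2 * ∫ x in O, R x) := by
    rw [integral_eq_lintegral_of_nonneg_ae (Filter.Eventually.of_forall fun x => sq_nonneg _)
      ((measurable_fderiv ℝ _).norm.pow_const 2).aestronglyMeasurable]
    exact ENNReal.toReal_le_of_le_ofReal (by positivity) hlin
  have hM2 : M ^ 2 ≤ 2 * (C2norm n φ ^ 2 + C2norm n ψ ^ 2) := by
    rw [hM]; nlinarith [sq_nonneg (C2norm n φ - C2norm n ψ)]
  set T : ℝ := C2norm n φ ^ 2 + C2norm n ψ ^ 2 with hT
  have hT0 : 0 ≤ T := by positivity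
  have hcoef : 0 ≤ 2 * n * A * (C₀ * V) := by positivity
  have hcoef' : 0 ≤ 5 * n * κ ^ 2 := by positivity
  have hstep : ∫ x in O, R x ≤ (4 * n * A * C₀ * V + 5 * n * κ ^ 2) * (W + T) := by
    have e1 := mul_le_mul_of_nonneg_left hM2 hcoef
    have e2 := mul_nonneg hcoef hW0
    have e3 := mul_nonneg hcoef' hT0
    linarith
  have hfinal : n * (2 * ∫ x in O, R x) ≤
      2 * n * (4 * n * A * C₀ * V + 5 * n * κ ^ 2) * (W + T) := by
    have := mul_le_mul_of_nonneg_left hstep (by positivity : (0 : ℝ) ≤ 2 * n)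
    linarith
  rw [add_assoc]
  linarith
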